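/- Let λ, λ₀ ∈ ℂ*, a, a₀, b, b₀ ∈ ℂ with 0 ≤ Re a < 1 and 0 ≤ Re a₀ < 1, and let W, W₀ ∈ O_𝔚 be nontrivial simple 𝔚-modules. Suppose the Virasoro module L(W, λ, a, b) is simple. Then L(W, λ, a, b) ≅ L(W₀, λ₀, a₀, b₀) if and only if one of the following holds: (i) W ≅ W₀ as 𝔚-modules, λ = λ₀, a = a₀ and b = b₀; or (ii) W and W₀ are highest weight modules with highest weights b' and b'₀ respectively, and λ₀ = λ⁻¹, a = a₀, b = b'₀ + 1, b₀ = b' + 1. -/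

import Mathlib

/-- A representation of the Witt algebra `𝔚 = span{d_i : i ≥ -1}`, encoded by the family of
operators `d i` (only the indices `i ≥ -1` are relevant) satisfying
`[d_m, d_n] = (n - m) d_{m+n}`. -/
structure WittRep (W : Type*) [AddCommGroup W] [Module ℂ W] where
  d : ℤ → W →ₗ[ℂ] W
  comm : ∀ m n : ℤ, -1 ≤ m → -1 ≤ n →
    d m ∘ₗ d n - d n ∘ₗ d m = (((n - m : ℤ) : ℂ)) • d (m + n)

namespace WittRep

variable {W : Type*} [AddCommGroup W] [Module ℂ W]

/-- Condition A : the module lies in the category `O_𝔚`. -/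
def InO (ρ : WittRep W) : Prop :=
  ∀ v : W, ∃ n : ℕ, ∀ i : ℤ, (n : ℤ) ≤ i → ρ.d i v = 0

/-- The module is trivial: the Lie algebra acts by zero. -/
def IsTrivial (ρ : WittRep W) : Prop := ∀ i : ℤ, -1 ≤ i → ρ.d i = 0

/-- A `𝔚`-submodule. -/
def Invariant (ρ : WittRep W) (U : Submodule ℂ W) : Prop :=
  ∀ i : ℤ, -1 ≤ i → ∀ u ∈ U, ρ.d i u ∈ U

/-- Simplicity of a `𝔚`-module. -/
def IsSimple (ρ : WittRep W) : Prop :=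
  (∃ v : W, v ≠ 0) ∧ ∀ U : Submodule ℂ W, ρ.Invariant U → U = ⊥ ∨ U = ⊤

/-- A `𝔟`-submodule (`𝔟 = span{d_i : i ≥ 0}`). -/
def BInvariant (ρ : WittRep W) (U : Submodule ℂ W) : Prop :=
  ∀ i : ℤ, 0 ≤ i → ∀ u ∈ U, ρ.d i u ∈ U

/-- The socle `Soc_𝔟(W)`: the sum of the minimal nonzero `𝔟`-submodules. -/
def Soc (ρ : WittRep W) : Submodule ℂ W :=
  sSup {U | ρ.BInvariant U ∧ U ≠ ⊥ ∧
    ∀ U' : Submodule ℂ W, ρ.BInvariant U' → U' ≠ ⊥ → U' ≤ U → U' = U}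

/-- `w₀` is a highest weight vector of weight `b'`. -/
def IsHW (ρ : WittRep W) (w₀ : W) (b' : ℂ) : Prop :=
  w₀ ≠ 0 ∧ ρ.d 0 w₀ = b' • w₀ ∧ ∀ i : ℤ, 1 ≤ i → ρ.d i w₀ = 0

/-- `w₀` generates the `𝔚`-module. -/
def Generates (ρ : WittRep W) (w₀ : W) : Prop :=
  ∀ U : Submodule ℂ W, ρ.Invariant U → w₀ ∈ U → U = ⊤

/-- The operator `e^{kt} d/dt = Σ_{i ≥ 0} (k^i/i!) d_{i-1}` (a finite sum on each vector of a
module in `O_𝔚`). -/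
noncomputable def E (ρ : WittRep W) (k : ℤ) (w : W) : W :=
  ∑ᶠ i : ℕ, (((k : ℂ) ^ i) / (Nat.factorial i : ℂ)) • ρ.d ((i : ℤ) - 1) w

/-- The action of `d_k` on `L(W, λ, a, b) = W ⊗ ℂ[t, t⁻¹]`, realized on `ℤ →₀ W`
(`w ⊗ t^j ↦ Finsupp.single j w`):
`d_k · (w ⊗ t^j) = ((λ^k e^{kt} − 1) d/dt + a + kb + j) w ⊗ t^{k+j}`. -/
noncomputable def Lact (ρ : WittRep W) (lam a b : ℂ) (k : ℤ) (f : ℤ →₀ W) : ℤ →₀ W :=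
  f.sum fun j w => Finsupp.single (k + j)
    (lam ^ k • ρ.E k w - ρ.d (-1) w + (a + (k : ℂ) * b + (j : ℂ)) • w)

/-- The PBW map `ℕ →₀ ℂ → W`, `(k, c) ↦ c • d_{-1}^k w₀`. -/
noncomputable def pbwMap (ρ : WittRep W) (w₀ : W) : (ℕ →₀ ℂ) →ₗ[ℂ] W :=
  Finsupp.lsum ℂ fun k : ℕ => ((ρ.d (-1)) ^ k) ∘ₗ LinearMap.toSpanSingleton ℂ W w₀

/-- `W` is the Verma `𝔚`-module with highest weight vector `w₀` of highest weight `b'`. -/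
def IsVerma (ρ : WittRep W) (w₀ : W) (b' : ℂ) : Prop :=
  ρ.d 0 w₀ = b' • w₀ ∧ (∀ i : ℤ, 1 ≤ i → ρ.d i w₀ = 0) ∧
    Function.Bijective (ρ.pbwMap w₀)

/-- `W^{(n)} = Σ_{i=0}^n d_{-1}^i (Soc_𝔟 W)`. -/
noncomputable def Wn (ρ : WittRep W) (n : ℕ) : Submodule ℂ W :=
  ⨆ i : Fin (n + 1), Submodule.map ((ρ.d (-1)) ^ (i : ℕ)) ρ.Soc

/-- `L₀(a, b') = span{d₁^i · (w₀ ⊗ t^{2j})} ⊆ L(W, -1, a, b' + 1)`. -/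
noncomputable def Lzero (ρ : WittRep W) (a b' : ℂ) (w₀ : W) : Submodule ℂ (ℤ →₀ W) :=
  Submodule.span ℂ
    {g | ∃ (i : ℕ) (j : ℤ), g = (ρ.Lact (-1) a (b' + 1) 1)^[i] (Finsupp.single (2 * j) w₀)}

/-- `L₁(a, b') = span{d₁^i · (w₀ ⊗ t^{2j+1})} ⊆ L(W, -1, a, b' + 1)`. -/
noncomputable def Lone (ρ : WittRep W) (a b' : ℂ) (w₀ : W) : Submodule ℂ (ℤ →₀ W) :=
  Submodule.span ℂ
    {g | ∃ (i : ℕ) (j : ℤ), g = (ρ.Lact (-1) a (b' + 1) 1)^[i] (Finsupp.single (2 * j + 1) w₀)}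

end WittRep

/-- A representation of the Lie algebra `𝔟 = span{d_i : i ≥ 0}`. -/
structure BRep (B : Type*) [AddCommGroup B] [Module ℂ B] where
  d : ℕ → B →ₗ[ℂ] B
  comm : ∀ m n : ℕ, d m ∘ₗ d n - d n ∘ₗ d m = (((n : ℂ) - (m : ℂ))) • d (m + n)

namespace BRep

variable {B : Type*} [AddCommGroup B] [Module ℂ B]

/-- Condition A : the module lies in the category `O_𝔟`. -/
def InO (ρ : BRep B) : Prop := ∀ v : B, ∃ n : ℕ, ∀ i : ℕ, n ≤ i → ρ.d i v = 0

def IsTrivial (ρ : BRep B) : Prop := ∀ i : ℕ, ρ.d i = 0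

def IsSimple (ρ : BRep B) : Prop :=
  (∃ v : B, v ≠ 0) ∧
    ∀ U : Submodule ℂ B, (∀ i : ℕ, ∀ u ∈ U, ρ.d i u ∈ U) → U = ⊥ ∨ U = ⊤

/-- The set of `r ∈ ℤ≥0` such that `d_{r+i} v = 0` for all `i ≥ 1`;
`ord_𝔟(v)` is its least element. -/
def ordSet (ρ : BRep B) (v : B) : Set ℕ := {r : ℕ | ∀ i : ℕ, r + 1 ≤ i → ρ.d i v = 0}

/-- The action of `d_m` on the Virasoro module `N(B_(c), a) = B ⊗ ℂ[t, t⁻¹]`, realized on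
`ℤ →₀ B`:  `d_m · (w ⊗ t^j) = (Σ_{i≥1} (m^i/i!) d_{i-1} + mc + a + j) w ⊗ t^{m+j}`
(`c` is the twist of the `d₀`-action; `c = 0` gives `N(B, a)`). -/
noncomputable def Nact (ρ : BRep B) (a c : ℂ) (m : ℤ) (f : ℤ →₀ B) : ℤ →₀ B :=
  f.sum fun j w => Finsupp.single (m + j)
    ((∑ᶠ i : ℕ, (((m : ℂ) ^ (i + 1)) / (Nat.factorial (i + 1) : ℂ)) • ρ.d i w) +
      ((m : ℂ) * c + a + (j : ℂ)) • w)

end BRep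

/-- For a family `U : ℤ → Submodule ℂ W`, the subspace `⊕_j U j ⊗ t^j` of `W ⊗ ℂ[t,t⁻¹]`. -/
def gradedSub {W : Type*} [AddCommGroup W] [Module ℂ W] (U : ℤ → Submodule ℂ W) :
    Submodule ℂ (ℤ →₀ W) where
  carrier := {f | ∀ j, f j ∈ U j}
  add_mem' := fun hf hg j => by
    simpa only [Finsupp.add_apply] using (U j).add_mem (hf j) (hg j)
  zero_mem' := fun j => by simp
  smul_mem' := fun c f hf j => by
    simpa only [Finsupp.smul_apply] using (U j).smul_mem c (hf j)

/-- A submodule invariant under a (ℤ-indexed) family of operators. -/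
def ActInvariant {V : Type*} [AddCommGroup V] [Module ℂ V] (act : ℤ → V → V)
    (M : Submodule ℂ V) : Prop :=
  ∀ k : ℤ, ∀ u ∈ M, act k u ∈ M

/-- Simplicity of the module given by a family of operators (the central element acts by zero). -/
def ActSimple {V : Type*} [AddCommGroup V] [Module ℂ V] (act : ℤ → V → V) : Prop :=
  (∃ v : V, v ≠ 0) ∧ ∀ M : Submodule ℂ V, ActInvariant act M → M = ⊥ ∨ M = ⊤

/-- A representation of the Virasoro algebra. -/
structure VirasoroRep (V : Type*) [AddCommGroup V] [Module ℂ V] where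
  d : ℤ → V →ₗ[ℂ] V
  z : V →ₗ[ℂ] V
  comm : ∀ m n : ℤ, d m ∘ₗ d n - d n ∘ₗ d m =
    (((n - m : ℤ) : ℂ)) • d (m + n) +
      (if m + n = 0 then (((n : ℂ) ^ 3 - (n : ℂ)) / 12) else 0) • z
  comm_z : ∀ m : ℤ, d m ∘ₗ z = z ∘ₗ d m

section ExponentialPolynomials

open Polynomial

/-- The shift `f ↦ f (· + 1)` on functions `ℤ → ℂ`. -/
def shiftEnd : Module.End ℂ (ℤ → ℂ) where
  toFun f m := f (m + 1)
  map_add' _ _ := rfl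
  map_smul' _ _ := rfl

lemma shiftEnd_sub_pow_expPoly (β : ℂ) (hβ : β ≠ 0) (p : ℂ[X]) (n : ℕ) (m : ℤ) :
    ((shiftEnd - β • (1 : Module.End ℂ (ℤ → ℂ))) ^ n) (fun m => β ^ m * p.eval (m : ℂ)) m =
      β ^ (m + n) * (fwdDiff (1 : ℂ))^[n] p.eval (m : ℂ) := by
  induction n generalizing m with
  | zero => simp
  | succ n ih =>
    rw [pow_succ', Module.End.mul_apply, Function.iterate_succ_apply']
    simp only [LinearMap.sub_apply, LinearMap.smul_apply, Module.End.one_apply, Pi.sub_apply,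
      Pi.smul_apply, smul_eq_mul, fwdDiff]
    change ((shiftEnd - β • (1 : Module.End ℂ (ℤ → ℂ))) ^ n) _ (m + 1) - _ = _
    rw [ih, ih]
    push_cast
    rw [show m + 1 + (n : ℤ) = m + n + 1 by ring, show m + ((n : ℤ) + 1) = m + n + 1 by ring,
      zpow_add₀ hβ, zpow_one]
    ring

lemma expPoly_mem_maxGenEigenspace (β : ℂ) (hβ : β ≠ 0) (p : ℂ[X]) :
    (fun m : ℤ => β ^ m * p.eval (m : ℂ)) ∈ shiftEnd.maxGenEigenspace β := by
  rw [Module.End.mem_maxGenEigenspace]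
  refine ⟨p.natDegree + 1, funext fun m => ?_⟩
  rw [shiftEnd_sub_pow_expPoly β hβ, Polynomial.fwdDiff_iter_degree_add_one_eq_zero]
  simp

lemma Polynomial.eq_zero_of_eval_intCast (p : ℂ[X]) (h : ∀ m : ℤ, p.eval (m : ℂ) = 0) : p = 0 :=
  p.eq_zero_of_infinite_isRoot <|
    (Set.infinite_range_of_injective (Int.cast_injective (α := ℂ))).mono <| by
      rintro _ ⟨m, rfl⟩
      exact h m

lemma expPoly_separate_scalar {ι : Type*} [Fintype ι] (base : ι → ℂ) (hb : ∀ i, base i ≠ 0)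
    (p : ι → ℂ[X]) (h : ∀ m : ℤ, ∑ i, base i ^ m * (p i).eval (m : ℂ) = 0) (β : ℂ) :
    ∑ i, (if base i = β then p i else 0) = 0 := by
  classical
  by_cases hβ : β ∈ Finset.univ.image base
  swap
  · refine Finset.sum_eq_zero fun i _ => if_neg ?_
    rintro rfl
    exact hβ (Finset.mem_image_of_mem _ (Finset.mem_univ i))
  have hne : ∀ γ ∈ Finset.univ.image base, γ ≠ 0 := by
    intro γ hγ
    obtain ⟨i, -, rfl⟩ := Finset.mem_image.1 hγ
    exact hb i
  have key := (iSupIndep_iff_finsetSum_eq_zero_imp_eq_zero _).1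
    shiftEnd.independent_maxGenEigenspace (Finset.univ.image base)
    (fun γ (m : ℤ) => γ ^ m * (∑ i, (if base i = γ then p i else 0)).eval (m : ℂ))
    (fun γ hγ => expPoly_mem_maxGenEigenspace γ (hne γ hγ) _) ?_ β hβ
  · refine Polynomial.eq_zero_of_eval_intCast _ fun m => ?_
    have := congrFun key m
    exact (mul_eq_zero.1 this).resolve_left (zpow_ne_zero _ (hne β hβ))
  · funext m
    rw [Finset.sum_apply, Pi.zero_apply, ← h m]
    simp only [eval_finsetSum, Finset.mul_sum]
    rw [Finset.sum_comm]
    refine Finset.sum_congr rfl fun i _ => ?_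
    rw [Finset.sum_eq_single (base i)]
    · simp
    · intro γ _ hγ
      simp [hγ.symm]
    · intro hi
      exact absurd (Finset.mem_image_of_mem _ (Finset.mem_univ i)) hi

variable {V V' : Type*} [AddCommGroup V] [Module ℂ V] [AddCommGroup V'] [Module ℂ V']

/-- A vector valued function on `ℤ` which is polynomial after applying any linear functional. -/
def IsPolyFun (f : ℤ → V) : Prop :=
  ∀ ξ : Module.Dual ℂ V, ∃ p : ℂ[X], ∀ m : ℤ, ξ (f m) = p.eval (m : ℂ)

/-- `f` is polynomial of degree at most `N` with coefficient `v` in degree `N`. -/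
def HasTopCoeff (N : ℕ) (v : V) (f : ℤ → V) : Prop :=
  ∀ ξ : Module.Dual ℂ V, ∃ p : ℂ[X], p.natDegree ≤ N ∧ p.coeff N = ξ v ∧
    ∀ m : ℤ, ξ (f m) = p.eval (m : ℂ)

lemma HasTopCoeff.isPolyFun {N : ℕ} {v : V} {f : ℤ → V} (h : HasTopCoeff N v f) :
    IsPolyFun f := fun ξ => by
  obtain ⟨p, -, -, hp⟩ := h ξ
  exact ⟨p, hp⟩

lemma IsPolyFun.const (v : V) : IsPolyFun fun _ => v := fun ξ => ⟨C (ξ v), by simp⟩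

lemma IsPolyFun.add {f g : ℤ → V} (hf : IsPolyFun f) (hg : IsPolyFun g) :
    IsPolyFun fun m => f m + g m := fun ξ => by
  obtain ⟨p, hp⟩ := hf ξ
  obtain ⟨q, hq⟩ := hg ξ
  exact ⟨p + q, by simp [hp, hq]⟩

lemma IsPolyFun.affine_smul {f : ℤ → V} (hf : IsPolyFun f) (α c : ℂ) :
    IsPolyFun fun m => (α + c * m) • f m := fun ξ => by
  obtain ⟨p, hp⟩ := hf ξ
  exact ⟨(C α + C c * X) * p, by simp [hp]⟩

lemma IsPolyFun.map {f : ℤ → V} (hf : IsPolyFun f) (T : V →ₗ[ℂ] V') :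
    IsPolyFun fun m => T (f m) := fun ξ => hf (ξ ∘ₗ T)

lemma IsPolyFun.sum {ι : Type*} (s : Finset ι) {f : ι → ℤ → V} (hf : ∀ i ∈ s, IsPolyFun (f i)) :
    IsPolyFun fun m => ∑ i ∈ s, f i m := by
  classical
  induction s using Finset.induction_on with
  | empty => simpa using IsPolyFun.const (0 : V)
  | insert i s hi ih =>
    simp only [Finset.sum_insert hi]
    exact (hf i (Finset.mem_insert_self i s)).add
      (ih fun j hj => hf j (Finset.mem_insert_of_mem hj))

lemma HasTopCoeff.zero (N : ℕ) : HasTopCoeff N (0 : V) fun _ => 0 :=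
  fun ξ => ⟨0, by simp⟩

lemma HasTopCoeff.add {N : ℕ} {v u : V} {f g : ℤ → V} (hf : HasTopCoeff N v f)
    (hg : HasTopCoeff N u g) : HasTopCoeff N (v + u) fun m => f m + g m := fun ξ => by
  obtain ⟨p, hp, hpc, hpe⟩ := hf ξ
  obtain ⟨q, hq, hqc, hqe⟩ := hg ξ
  exact ⟨p + q, natDegree_add_le_of_degree_le hp hq, by simp [hpc, hqc], by simp [hpe, hqe]⟩

lemma HasTopCoeff.map {N : ℕ} {v : V} {f : ℤ → V} (hf : HasTopCoeff N v f) (T : V →ₗ[ℂ] V') :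
    HasTopCoeff N (T v) fun m => T (f m) := fun ξ => hf (ξ ∘ₗ T)

lemma HasTopCoeff.smul {N : ℕ} {v : V} {f : ℤ → V} (hf : HasTopCoeff N v f) (c : ℂ) :
    HasTopCoeff N (c • v) fun m => c • f m := hf.map (LinearMap.lsmul ℂ V c)

lemma HasTopCoeff.lift {N : ℕ} {v : V} {f : ℤ → V} (hf : HasTopCoeff N v f) {M : ℕ}
    (h : N < M) : HasTopCoeff M 0 f := fun ξ => by
  obtain ⟨p, hp, -, hpe⟩ := hf ξ
  exact ⟨p, by omega, by rw [map_zero]; exact coeff_eq_zero_of_natDegree_lt (by omega), hpe⟩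

lemma HasTopCoeff.affine_smul {N : ℕ} {v : V} {f : ℤ → V} (hf : HasTopCoeff N v f) (α c : ℂ) :
    HasTopCoeff (N + 1) (c • v) fun m => (α + c * m) • f m := fun ξ => by
  obtain ⟨p, hp, hpc, hpe⟩ := hf ξ
  refine ⟨(C α + C c * X) * p, ?_, ?_, by simp [hpe]⟩
  · rw [add_comm N 1]
    exact natDegree_mul_le_of_le (by compute_degree) hp
  · rw [add_mul, mul_assoc, coeff_add, coeff_C_mul, coeff_C_mul, coeff_X_mul, hpc,
      coeff_eq_zero_of_natDegree_lt (by omega)]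
    simp

lemma HasTopCoeff.affine_pow (α c : ℂ) (v : V) (i : ℕ) :
    HasTopCoeff i (c ^ i • v) fun m : ℤ => (α + c * m) ^ i • v := by
  induction i with
  | zero => exact fun ξ => ⟨C (ξ v), by simp⟩
  | succ i ih =>
    have := ih.affine_smul α c
    simpa only [smul_smul, ← pow_succ'] using this

lemma HasTopCoeff.eq_zero {N : ℕ} {v : V} {f : ℤ → V} (hf : HasTopCoeff N v f)
    (h : ∀ m, f m = 0) : v = 0 := by
  refine (Module.forall_dual_apply_eq_zero_iff ℂ v).1 fun ξ => ?_
  obtain ⟨p, -, hpc, hpe⟩ := hf ξ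
  rw [← hpc, p.eq_zero_of_eval_intCast fun m => by rw [← hpe, h, map_zero], coeff_zero]

/-- Distinct exponentials are linearly independent over polynomials. -/
lemma expPoly_separate {ι : Type*} [Fintype ι] (base : ι → ℂ) (hb : ∀ i, base i ≠ 0)
    (f : ι → ℤ → V) (hf : ∀ i, IsPolyFun (f i)) (h : ∀ m : ℤ, ∑ i, base i ^ m • f i m = 0)
    (β : ℂ) (m : ℤ) : ∑ i, (if base i = β then f i m else 0) = 0 := by
  refine (Module.forall_dual_apply_eq_zero_iff ℂ _).1 fun ξ => ?_
  choose p hp using fun i => hf i ξ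
  have key := expPoly_separate_scalar base hb p (fun m => by
    have := congrArg ξ (h m)
    simpa only [map_sum, map_smul, smul_eq_mul, hp, map_zero] using this) β
  have := congrArg (eval (m : ℂ)) key
  rw [eval_finsetSum, eval_zero] at this
  rw [map_sum, ← this]
  refine Finset.sum_congr rfl fun i _ => ?_
  split_ifs <;> simp [hp]

lemma polyFun_coeff_eq_zero (n : ℕ) (c : ℕ → V)
    (h : ∀ m : ℤ, ∑ i ∈ Finset.range n, (m : ℂ) ^ i • c i = 0) (i : ℕ) (hi : i < n) : c i = 0 := by
  refine (Module.forall_dual_apply_eq_zero_iff ℂ _).1 fun ξ => ?_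
  have key := Polynomial.eq_zero_of_eval_intCast (∑ i ∈ Finset.range n, C (ξ (c i)) * X ^ i)
    fun m => by
      have := congrArg ξ (h m)
      simpa only [eval_finsetSum, eval_mul, eval_C, eval_pow, eval_X, map_sum, map_smul,
        smul_eq_mul, map_zero, mul_comm] using this
  have := congrArg (fun p => coeff p i) key
  simpa [coeff_X_pow, hi] using this

end ExponentialPolynomials


namespace WittRep

variable {W W₀ V : Type*} [AddCommGroup W] [Module ℂ W] [AddCommGroup W₀] [Module ℂ W₀]
  [AddCommGroup V] [Module ℂ V]

/-- The coefficient `d_{i-1} / i!` of `k ^ i` in `e^{kt} d/dt`. -/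
noncomputable def e (ρ : WittRep W) (i : ℕ) : W →ₗ[ℂ] W :=
  ((i.factorial : ℂ)⁻¹) • ρ.d ((i : ℤ) - 1)

lemma e_zero (ρ : WittRep W) (w : W) : ρ.e 0 w = ρ.d (-1) w := by simp [e]

lemma e_one (ρ : WittRep W) (w : W) : ρ.e 1 w = ρ.d 0 w := by simp [e]

lemma e_eq_zero_iff (ρ : WittRep W) (i : ℕ) (w : W) : ρ.e i w = 0 ↔ ρ.d ((i : ℤ) - 1) w = 0 := by
  simp [e, Nat.factorial_ne_zero]

lemma d_eq_smul_e (ρ : WittRep W) (i : ℕ) (w : W) :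
    ρ.d ((i : ℤ) - 1) w = (i.factorial : ℂ) • ρ.e i w := by
  simp [e, smul_smul, Nat.factorial_ne_zero]

lemma comm_apply (ρ : WittRep W) {m n : ℤ} (hm : -1 ≤ m) (hn : -1 ≤ n) (w : W) :
    ρ.d m (ρ.d n w) = ρ.d n (ρ.d m w) + ((n - m : ℤ) : ℂ) • ρ.d (m + n) w := by
  have := LinearMap.congr_fun (ρ.comm m n hm hn) w
  simp only [LinearMap.sub_apply, LinearMap.comp_apply, LinearMap.smul_apply] at this
  rw [← this]
  abel

lemma e_succ_d_neg_one (ρ : WittRep W) (i : ℕ) (w : W) :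
    ρ.e (i + 1) (ρ.d (-1) w) = ρ.d (-1) (ρ.e (i + 1) w) - ρ.e i w := by
  simp only [e, LinearMap.smul_apply, map_smul]
  push_cast
  rw [add_sub_cancel_right, ρ.comm_apply (by omega) le_rfl, smul_add, smul_smul,
    ← sub_eq_add_neg (i : ℤ) 1, sub_eq_add_neg (_ • ρ.d (-1) _), ← neg_smul]
  congr 2
  rw [Nat.factorial_succ]
  have h1 : ((i : ℂ) + 1) ≠ 0 := by exact_mod_cast Nat.succ_ne_zero i
  have h2 : (i.factorial : ℂ) ≠ 0 := by exact_mod_cast i.factorial_ne_zero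
  push_cast
  field_simp
  ring

lemma e_eq_zero_of_lt (ρ : WittRep W) {n : ℕ} {w : W} (h : ∀ i : ℤ, (n : ℤ) ≤ i → ρ.d i w = 0)
    {i : ℕ} (hi : n < i) : ρ.e i w = 0 := by
  rw [e_eq_zero_iff]
  exact h _ (by omega)

lemma E_eq_sum (ρ : WittRep W) {n : ℕ} {w : W} (h : ∀ i : ℤ, (n : ℤ) ≤ i → ρ.d i w = 0) (k : ℤ) :
    ρ.E k w = ∑ i ∈ Finset.range (n + 1), (k : ℂ) ^ i • ρ.e i w := by
  have : ρ.E k w = ∑ᶠ i : ℕ, (k : ℂ) ^ i • ρ.e i w :=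
    finsum_congr fun i => by rw [e, LinearMap.smul_apply, smul_smul, div_eq_mul_inv]
  rw [this]
  refine finsum_eq_finsetSum_of_support_subset _ fun i hi => ?_
  by_contra hni
  refine hi ?_
  dsimp only
  rw [ρ.e_eq_zero_of_lt h (by simpa [Nat.lt_succ_iff] using hni), smul_zero]

lemma vanish_mono (ρ : WittRep W) {n m : ℕ} (hnm : n ≤ m) {w : W}
    (h : ∀ i : ℤ, (n : ℤ) ≤ i → ρ.d i w = 0) : ∀ i : ℤ, (m : ℤ) ≤ i → ρ.d i w = 0 :=
  fun i hi => h i (by omega)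

lemma E_add (ρ : WittRep W) (hO : ρ.InO) (k : ℤ) (w u : W) :
    ρ.E k (w + u) = ρ.E k w + ρ.E k u := by
  obtain ⟨n, hn⟩ := hO w
  obtain ⟨m, hm⟩ := hO u
  have hn' := ρ.vanish_mono (le_max_left n m) hn
  have hm' := ρ.vanish_mono (le_max_right n m) hm
  rw [ρ.E_eq_sum hn', ρ.E_eq_sum hm', ρ.E_eq_sum (n := max n m) (w := w + u)
    fun i hi => by rw [map_add, hn' i hi, hm' i hi, add_zero], ← Finset.sum_add_distrib]
  simp

lemma E_smul (ρ : WittRep W) (hO : ρ.InO) (k : ℤ) (c : ℂ) (w : W) :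
    ρ.E k (c • w) = c • ρ.E k w := by
  obtain ⟨n, hn⟩ := hO w
  rw [ρ.E_eq_sum hn, ρ.E_eq_sum (n := n) (w := c • w)
    fun i hi => by rw [map_smul, hn i hi, smul_zero], Finset.smul_sum]
  simp only [map_smul, smul_comm c]

/-- `e^{kt} d/dt` as a linear map. -/
noncomputable def ELin (ρ : WittRep W) (hO : ρ.InO) (k : ℤ) : W →ₗ[ℂ] W where
  toFun := ρ.E k
  map_add' := ρ.E_add hO k
  map_smul' := ρ.E_smul hO k

lemma ELin_apply (ρ : WittRep W) (hO : ρ.InO) (k : ℤ) (w : W) : ρ.ELin hO k w = ρ.E k w := rfl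

lemma E_zero (ρ : WittRep W) (hO : ρ.InO) (w : W) : ρ.E 0 w = ρ.d (-1) w := by
  obtain ⟨n, hn⟩ := hO w
  rw [ρ.E_eq_sum hn, Finset.sum_range_succ']
  simp [e_zero]

lemma E_d_neg_one (ρ : WittRep W) (hO : ρ.InO) (k : ℤ) (w : W) :
    ρ.E k (ρ.d (-1) w) = ρ.d (-1) (ρ.E k w) - (k : ℂ) • ρ.E k w := by
  obtain ⟨n, hn⟩ := hO w
  have hn' : ∀ i : ℤ, ((n + 1 : ℕ) : ℤ) ≤ i → ρ.d i (ρ.d (-1) w) = 0 := fun i hi => by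
    rw [ρ.comm_apply (by omega) le_rfl, hn i (by omega), hn _ (by omega), map_zero, smul_zero,
      add_zero]
  rw [ρ.E_eq_sum hn' k]
  nth_rewrite 1 [ρ.E_eq_sum (ρ.vanish_mono n.le_succ hn) k]
  rw [ρ.E_eq_sum hn k, Finset.sum_range_succ' _ (n + 1), Finset.sum_range_succ' _ n.succ, map_add,
    map_sum, Finset.smul_sum, add_sub_right_comm, ← Finset.sum_sub_distrib]
  congr 1
  · refine Finset.sum_congr rfl fun i _ => ?_
    rw [e_succ_d_neg_one, smul_sub, map_smul, smul_smul, pow_succ']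
  · simp [e_zero]

lemma isPolyFun_E_affine (ρ : WittRep W) (hO : ρ.InO) (α c : ℤ) (w : W) :
    IsPolyFun fun m : ℤ => ρ.E (α + c * m) w := by
  obtain ⟨n, hn⟩ := hO w
  simp only [ρ.E_eq_sum hn, Int.cast_add, Int.cast_mul]
  exact IsPolyFun.sum _ fun i _ => (HasTopCoeff.affine_pow (α : ℂ) c (ρ.e i w) i).isPolyFun

lemma hasTopCoeff_E_affine (ρ : WittRep W) {N : ℕ} {w : W}
    (h : ∀ i : ℤ, (N : ℤ) ≤ i → ρ.d i w = 0) (α c : ℤ) :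
    HasTopCoeff N ((c : ℂ) ^ N • ρ.e N w) fun m : ℤ => ρ.E (α + c * m) w := by
  simp only [ρ.E_eq_sum h, Int.cast_add, Int.cast_mul, Finset.sum_range_succ]
  rw [← zero_add ((c : ℂ) ^ N • ρ.e N w)]
  refine HasTopCoeff.add ?_ (HasTopCoeff.affine_pow _ _ _ N)
  have : ∀ M ≤ N, HasTopCoeff N (0 : W)
      fun m : ℤ => ∑ i ∈ Finset.range M, ((α : ℂ) + c * m) ^ i • ρ.e i w := by
    intro M
    induction M with
    | zero => intro _; simpa using HasTopCoeff.zero (V := W) N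
    | succ M ih =>
      intro hM
      simp only [Finset.sum_range_succ]
      rw [← add_zero (0 : W)]
      exact (ih (by omega)).add ((HasTopCoeff.affine_pow _ _ _ M).lift hM)
  exact this N le_rfl

lemma isPolyFun_E (ρ : WittRep W) (hO : ρ.InO) (w : W) : IsPolyFun fun m : ℤ => ρ.E m w := by
  simpa using ρ.isPolyFun_E_affine hO 0 1 w

/-- Comparison of coefficients in an identity between the polynomial functions `k ↦ e^{kt} d/dt`. -/
lemma coeff_compare (ρ : WittRep W) (ρ₀ : WittRep W₀) (hO : ρ.InO) (hO₀ : ρ₀.InO)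
    (T : W →ₗ[ℂ] V) (T₀ : W₀ →ₗ[ℂ] V) (w : W) (v : W₀) (A B : V)
    (h : ∀ k : ℤ, T (ρ.E k w) = T₀ (ρ₀.E k v) + A + (k : ℂ) • B) :
    T (ρ.d (-1) w) = T₀ (ρ₀.d (-1) v) + A ∧ T (ρ.d 0 w) = T₀ (ρ₀.d 0 v) + B ∧
      ∀ i : ℤ, 1 ≤ i → T (ρ.d i w) = T₀ (ρ₀.d i v) := by
  obtain ⟨n, hn⟩ := hO w
  obtain ⟨m, hm⟩ := hO₀ v
  have hn' := ρ.vanish_mono (le_max_left n m) hn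
  have hm' := ρ₀.vanish_mono (le_max_right n m) hm
  set N := max n m
  have key : ∀ i < N + 2, T (ρ.e i w) - T₀ (ρ₀.e i v) - (if i = 0 then A else 0)
      - (if i = 1 then B else 0) = 0 := by
    refine polyFun_coeff_eq_zero _ _ fun k => ?_
    have hk := h k
    rw [ρ.E_eq_sum (ρ.vanish_mono N.le_succ hn') k,
      ρ₀.E_eq_sum (ρ₀.vanish_mono N.le_succ hm') k] at hk
    simp only [smul_sub, Finset.sum_sub_distrib, smul_ite, smul_zero]
    simp only [map_sum, map_smul, Nat.succ_eq_add_one, add_assoc N 1 1, one_add_one_eq_two] at hk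
    rw [Finset.sum_ite_eq', Finset.sum_ite_eq', if_pos (by simp), if_pos (by simp), hk, pow_zero,
      one_smul, pow_one]
    abel
  refine ⟨?_, ?_, fun i hi => ?_⟩
  · have := key 0 (by omega)
    simp only [e_zero, if_true, zero_ne_one, if_false, sub_zero] at this
    rw [sub_sub] at this
    exact sub_eq_zero.1 this
  · have := key 1 (by omega)
    simp only [e_one, if_true, one_ne_zero, if_false, sub_zero] at this
    rw [sub_sub] at this
    exact sub_eq_zero.1 this
  · by_cases hiN : (N : ℤ) ≤ i
    · rw [hn' i hiN, hm' i hiN, map_zero, map_zero]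
    · obtain ⟨j, rfl⟩ : ∃ j : ℕ, i = (j : ℤ) - 1 := ⟨(i + 1).toNat, by omega⟩
      have := key j (by omega)
      rw [if_neg (by omega), if_neg (by omega), sub_zero, sub_zero, sub_eq_zero] at this
      rw [d_eq_smul_e, d_eq_smul_e, map_smul, map_smul, this]

section Simple

variable (ρ : WittRep W)

lemma eq_zero_of_forall_d (hnt : ¬ ρ.IsTrivial) (hs : ρ.IsSimple) {w : W}
    (hw : ∀ i : ℤ, -1 ≤ i → ρ.d i w = 0) : w = 0 := by
  let K : Submodule ℂ W := ⨅ i : {i : ℤ // -1 ≤ i}, LinearMap.ker (ρ.d i)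
  have hK : ∀ u, u ∈ K ↔ ∀ i : ℤ, -1 ≤ i → ρ.d i u = 0 := fun u => by
    simp [K, Submodule.mem_iInf]
  rcases hs.2 K fun i hi u hu => by rw [(hK u).1 hu i hi]; exact K.zero_mem with h | h
  · have := (hK w).2 hw
    rwa [h, Submodule.mem_bot] at this
  · refine absurd (fun i hi => LinearMap.ext fun u => ?_) hnt
    exact (hK u).1 (h ▸ Submodule.mem_top) i hi

lemma exists_order (hO : ρ.InO) (hnt : ¬ ρ.IsTrivial) (hs : ρ.IsSimple) {w : W} (hw : w ≠ 0) :
    ∃ N : ℕ, ρ.e N w ≠ 0 ∧ ∀ i : ℤ, (N : ℤ) ≤ i → ρ.d i w = 0 := by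
  classical
  have hex := hO w
  refine ⟨Nat.find hex, fun h0 => ?_, Nat.find_spec hex⟩
  have hspec := Nat.find_spec hex
  rw [e_eq_zero_iff] at h0
  rcases Nat.eq_zero_or_pos (Nat.find hex) with hz | hpos
  · refine hw (ρ.eq_zero_of_forall_d hnt hs fun i hi => ?_)
    rw [hz] at h0 hspec
    rcases hi.eq_or_lt with rfl | hlt
    · simpa using h0
    · exact hspec i (by push_cast; omega)
  · refine Nat.find_min hex (Nat.sub_lt hpos one_pos) fun i hi => ?_
    by_cases hlt : (Nat.find hex : ℤ) ≤ i
    · exact hspec i hlt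
    · rwa [show i = (Nat.find hex : ℤ) - 1 by omega]

lemma d_order_ne_zero {N : ℕ} {w : W} (hN : ρ.e N w ≠ 0)
    (h : ∀ i : ℤ, (N : ℤ) ≤ i → ρ.d i w = 0) (c : ℂ) :
    ρ.d N (c • w - ρ.d (-1) w) ≠ 0 := by
  have h1 : ρ.e (N + 1) (c • w - ρ.d (-1) w) = ρ.e N w := by
    rw [map_sub, map_smul, e_succ_d_neg_one, ρ.e_eq_zero_of_lt h N.lt_succ_self]
    simp
  intro h0
  refine hN (h1 ▸ (ρ.e_eq_zero_iff _ _).2 ?_)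
  simpa using h0

lemma smul_sub_d_ne_zero (hO : ρ.InO) (hnt : ¬ ρ.IsTrivial) (hs : ρ.IsSimple) {w : W}
    (hw : w ≠ 0) (c : ℂ) : c • w - ρ.d (-1) w ≠ 0 := by
  obtain ⟨N, hN, h⟩ := ρ.exists_order hO hnt hs hw
  intro h0
  exact ρ.d_order_ne_zero hN h c (by rw [h0, map_zero])

end Simple

end WittRep


namespace WittRep

variable {W W₀ : Type*} [AddCommGroup W] [Module ℂ W] [AddCommGroup W₀] [Module ℂ W₀]

/-- The operator `W ⊗ t^j → W ⊗ t^{k+j}` given by the action of `d_k` on `L(W, λ, a, b)`. -/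
noncomputable def degAct (ρ : WittRep W) (lam a b : ℂ) (k j : ℤ) (w : W) : W :=
  lam ^ k • ρ.E k w - ρ.d (-1) w + (a + (k : ℂ) * b + (j : ℂ)) • w

section Lact

variable (ρ : WittRep W) (hO : ρ.InO) (lam a b : ℂ)

include hO

lemma degAct_add (k j : ℤ) (w u : W) : ρ.degAct lam a b k j (w + u) =
    ρ.degAct lam a b k j w + ρ.degAct lam a b k j u := by
  simp only [degAct, ρ.E_add hO, map_add, smul_add]
  abel

lemma degAct_zero (k j : ℤ) : ρ.degAct lam a b k j 0 = 0 := by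
  simp [degAct, ← ρ.ELin_apply hO]

lemma degAct_smul (k j : ℤ) (c : ℂ) (w : W) : ρ.degAct lam a b k j (c • w) =
    c • ρ.degAct lam a b k j w := by
  simp only [degAct, ρ.E_smul hO, map_smul, smul_add, smul_sub, smul_comm c]

lemma Lact_single (k j : ℤ) (w : W) : ρ.Lact lam a b k (Finsupp.single j w) =
    Finsupp.single (k + j) (ρ.degAct lam a b k j w) := by
  change (Finsupp.single j w).sum (fun j w => Finsupp.single (k + j) (ρ.degAct lam a b k j w)) = _
  rw [Finsupp.sum_single_index]
  rw [ρ.degAct_zero hO, Finsupp.single_zero]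

lemma Lact_add (k : ℤ) (f g : ℤ →₀ W) : ρ.Lact lam a b k (f + g) =
    ρ.Lact lam a b k f + ρ.Lact lam a b k g := by
  change (f + g).sum (fun j w => Finsupp.single (k + j) (ρ.degAct lam a b k j w)) = _
  refine Finsupp.sum_add_index' (fun j => ?_) fun j w u => ?_
  · rw [ρ.degAct_zero hO, Finsupp.single_zero]
  · rw [ρ.degAct_add hO, Finsupp.single_add]

lemma Lact_apply (k : ℤ) (f : ℤ →₀ W) (i : ℤ) : ρ.Lact lam a b k f i =
    ρ.degAct lam a b k (i - k) (f (i - k)) := by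
  classical
  induction f using Finsupp.induction_linear with
  | zero => simp [Lact, ρ.degAct_zero hO]
  | add f g hf hg => rw [ρ.Lact_add hO, Finsupp.add_apply, hf, hg, Finsupp.add_apply,
      ρ.degAct_add hO]
  | single j w =>
    rw [ρ.Lact_single hO, Finsupp.single_apply, Finsupp.single_apply]
    by_cases h : k + j = i
    · rw [if_pos h, if_pos (by omega), show i - k = j by omega]
    · rw [if_neg h, if_neg (by omega), ρ.degAct_zero hO]

lemma actInvariant_gradedSub (U : ℤ → Submodule ℂ W)
    (h : ∀ k j : ℤ, ∀ w ∈ U j, ρ.degAct lam a b k j w ∈ U (k + j)) :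
    ActInvariant (ρ.Lact lam a b) (gradedSub U) := by
  intro k f hf i
  rw [ρ.Lact_apply hO]
  have := h k (i - k) _ (hf (i - k))
  rwa [add_sub_cancel] at this

lemma graded_eq_bot_or_top (hL : ActSimple (ρ.Lact lam a b)) (U : ℤ → Submodule ℂ W)
    (h : ∀ k j : ℤ, ∀ w ∈ U j, ρ.degAct lam a b k j w ∈ U (k + j)) : U 0 = ⊥ ∨ U 0 = ⊤ := by
  rcases hL.2 _ (ρ.actInvariant_gradedSub hO lam a b U h) with h0 | h0
  · refine Or.inl ((Submodule.eq_bot_iff _).2 fun w hw => ?_)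
    have hmem : Finsupp.single 0 w ∈ gradedSub U := fun j => by
      rw [Finsupp.single_apply]
      split_ifs with hj
      · rwa [← hj]
      · exact (U j).zero_mem
    rw [h0, Submodule.mem_bot, Finsupp.single_eq_zero] at hmem
    exact hmem
  · refine Or.inr (Submodule.eq_top_iff'.2 fun w => ?_)
    have hmem : Finsupp.single 0 w ∈ gradedSub U := h0 ▸ Submodule.mem_top
    simpa using hmem 0

variable (hnt : ¬ ρ.IsTrivial) (hs : ρ.IsSimple)

include hnt hs

lemma lam_ne_one_of_actSimple (hL : ActSimple (ρ.Lact lam a b)) : lam ≠ 1 := by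
  rintro rfl
  obtain ⟨w, hw⟩ := hs.1
  obtain ⟨N, hN, hv⟩ := ρ.exists_order hO hnt hs hw
  let U : Submodule ℂ W := ⨅ i : {i : ℤ // (N : ℤ) ≤ i}, LinearMap.ker (ρ.d i)
  have hU : ∀ u, u ∈ U ↔ ∀ i : ℤ, (N : ℤ) ≤ i → ρ.d i u = 0 := fun u => by
    simp [U, Submodule.mem_iInf]
  have hinv : ∀ k j : ℤ, ∀ u ∈ U, ρ.degAct 1 a b k j u ∈ U := by
    intro k j u hu
    rw [hU] at hu
    rw [degAct, ρ.E_eq_sum hu, Finset.sum_range_succ', one_zpow, one_smul, pow_zero, one_smul,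
      e_zero, add_sub_cancel_right]
    refine U.add_mem (U.sum_mem fun i _ => U.smul_mem _ ?_) (U.smul_mem _ ((hU u).2 hu))
    refine (hU _).2 fun n hn => ?_
    rw [e, LinearMap.smul_apply, map_smul, ρ.comm_apply (by omega) (by omega), hu n hn,
      hu _ (by omega)]
    simp
  rcases ρ.graded_eq_bot_or_top hO 1 a b hL (fun _ => U) hinv with h | h
  · exact hw ((Submodule.eq_bot_iff _).1 h w ((hU w).2 hv))
  · have : (0 : ℂ) • w - ρ.d (-1) w ∈ U := h ▸ Submodule.mem_top
    exact ρ.d_order_ne_zero hN hv 0 ((hU _).1 this N le_rfl)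

lemma b_ne_one_of_actSimple (hL : ActSimple (ρ.Lact lam a b)) : b ≠ 1 := by
  rintro rfl
  obtain ⟨w, hw⟩ := hs.1
  have hinv : ∀ k j : ℤ, ∀ u ∈ LinearMap.range ((a + j : ℂ) • LinearMap.id - ρ.d (-1)),
      ρ.degAct lam a 1 k j u ∈
        LinearMap.range ((a + (k + j : ℤ) : ℂ) • LinearMap.id - ρ.d (-1)) := by
    rintro k j _ hu
    obtain ⟨q, rfl⟩ := hu
    refine ⟨lam ^ k • ρ.E k q + ((a + j : ℂ) • q - ρ.d (-1) q), ?_⟩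
    have hE : ρ.E k ((a + j : ℂ) • q - ρ.d (-1) q) =
        (a + j : ℂ) • ρ.E k q - (ρ.d (-1) (ρ.E k q) - (k : ℂ) • ρ.E k q) := by
      rw [← ρ.ELin_apply hO, map_sub, map_smul, ELin_apply, ELin_apply, ρ.E_d_neg_one hO]
    simp only [degAct, LinearMap.sub_apply, LinearMap.smul_apply, LinearMap.id_apply, hE, map_add,
      map_sub, map_smul]
    push_cast
    module
  rcases ρ.graded_eq_bot_or_top hO lam a 1 hL
    (fun j => LinearMap.range ((a + j : ℂ) • LinearMap.id - ρ.d (-1))) hinv with h | h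
  · exact ρ.smul_sub_d_ne_zero hO hnt hs hw (a + (0 : ℤ)) ((Submodule.eq_bot_iff _).1 h _ ⟨w, rfl⟩)
  · have hex : ∃ N : ℕ, ∃ u : W, ρ.e N u ≠ 0 ∧ ∀ i : ℤ, (N : ℤ) ≤ i → ρ.d i u = 0 := by
      obtain ⟨N, hN⟩ := ρ.exists_order hO hnt hs hw
      exact ⟨N, w, hN⟩
    classical
    obtain ⟨u, hu, hv⟩ := Nat.find_spec hex
    obtain ⟨q, rfl⟩ : u ∈ LinearMap.range ((a + (0 : ℤ) : ℂ) • LinearMap.id - ρ.d (-1)) :=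
      h ▸ Submodule.mem_top
    have hq : q ≠ 0 := by
      rintro rfl
      simp at hu
    obtain ⟨M, hM, hMv⟩ := ρ.exists_order hO hnt hs hq
    exact ρ.d_order_ne_zero hM hMv _ (hv M (by exact_mod_cast Nat.find_min' hex ⟨q, hM, hMv⟩))

end Lact

/-- The graded isomorphism of `W ⊗ ℂ[t, t⁻¹]` given by isomorphisms in each degree. -/
noncomputable def gradedEquiv (θ : ℤ → W ≃ₗ[ℂ] W₀) : (ℤ →₀ W) ≃ₗ[ℂ] (ℤ →₀ W₀) := by
  classical
  exact finsuppLequivDFinsupp ℂ ≪≫ₗ DFinsupp.mapRange.linearEquiv θ ≪≫ₗ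
    (finsuppLequivDFinsupp ℂ).symm

lemma gradedEquiv_apply (θ : ℤ → W ≃ₗ[ℂ] W₀) (f : ℤ →₀ W) (i : ℤ) :
    gradedEquiv θ f i = θ i (f i) := by
  simp [gradedEquiv]

lemma gradedEquiv_Lact (ρ : WittRep W) (ρ₀ : WittRep W₀) (hO : ρ.InO) (hO₀ : ρ₀.InO)
    (lam a b lam₀ a₀ b₀ : ℂ) (θ : ℤ → W ≃ₗ[ℂ] W₀)
    (h : ∀ k j w, θ (k + j) (ρ.degAct lam a b k j w) = ρ₀.degAct lam₀ a₀ b₀ k j (θ j w))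
    (k : ℤ) (f : ℤ →₀ W) :
    gradedEquiv θ (ρ.Lact lam a b k f) = ρ₀.Lact lam₀ a₀ b₀ k (gradedEquiv θ f) := by
  ext i
  rw [gradedEquiv_apply, ρ.Lact_apply hO, ρ₀.Lact_apply hO₀, gradedEquiv_apply, ← h,
    add_sub_cancel]

section HighestWeight

open Polynomial

/-- The map `f ↦ f(d_{-1}) w₀`. -/
noncomputable def polyMap (ρ : WittRep W) (w₀ : W) : ℂ[X] →ₗ[ℂ] W :=
  LinearMap.applyₗ w₀ ∘ₗ (aeval (ρ.d (-1))).toLinearMap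

lemma polyMap_one (ρ : WittRep W) (w₀ : W) : ρ.polyMap w₀ 1 = w₀ := by simp [polyMap]

lemma polyMap_X_mul (ρ : WittRep W) (w₀ : W) (f : ℂ[X]) :
    ρ.polyMap w₀ (X * f) = ρ.d (-1) (ρ.polyMap w₀ f) := by simp [polyMap]

lemma polyMap_C_mul (ρ : WittRep W) (w₀ : W) (c : ℂ) (f : ℂ[X]) :
    ρ.polyMap w₀ (C c * f) = c • ρ.polyMap w₀ f := by
  rw [← smul_eq_C_mul, map_smul]

lemma polyMap_injective (ρ : WittRep W) (hO : ρ.InO) (hnt : ¬ ρ.IsTrivial) (hs : ρ.IsSimple)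
    {w₀ : W} (hw : w₀ ≠ 0) : Function.Injective (ρ.polyMap w₀) := by
  rw [injective_iff_map_eq_zero]
  have key : ∀ n : ℕ, ∀ f : ℂ[X], f.natDegree = n → ρ.polyMap w₀ f = 0 → f = 0 := by
    intro n
    induction n with
    | zero =>
      intro f hf h0
      rw [eq_C_of_natDegree_eq_zero hf, ← mul_one (C _), polyMap_C_mul, polyMap_one,
        smul_eq_zero] at h0
      rw [eq_C_of_natDegree_eq_zero hf, h0.resolve_right hw, C_0]
    | succ n ih =>
      intro f hf h0
      obtain ⟨c, hc⟩ := IsAlgClosed.exists_root f fun h => by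
        have := natDegree_eq_of_degree_eq_some (n := 0) (by simpa using h)
        omega
      obtain ⟨g, rfl⟩ := dvd_iff_isRoot.2 hc
      have hg0 : g ≠ 0 := by rintro rfl; simp at hf
      rw [natDegree_mul (X_sub_C_ne_zero c) hg0, natDegree_X_sub_C] at hf
      refine absurd (ih g (by omega) (by_contra fun hne => ?_)) hg0
      refine ρ.smul_sub_d_ne_zero hO hnt hs hne c ?_
      rw [sub_mul, map_sub, polyMap_X_mul, polyMap_C_mul] at h0
      rw [← neg_eq_zero, neg_sub, h0]
  exact fun f h => key _ f rfl h

lemma polyMap_surjective (ρ : WittRep W) (hs : ρ.IsSimple) {w₀ : W} {b' : ℂ}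
    (hw : ρ.IsHW w₀ b') : Function.Surjective (ρ.polyMap w₀) := by
  have hX : ∀ n : ℕ, ∀ i : ℤ, -1 ≤ i →
      ρ.d i (ρ.polyMap w₀ (X ^ n)) ∈ LinearMap.range (ρ.polyMap w₀) := by
    intro n
    induction n with
    | zero =>
      intro i hi
      rw [pow_zero]
      rcases hi.eq_or_lt with rfl | hi
      · exact ⟨X * 1, polyMap_X_mul ..⟩
      rw [polyMap_one]
      rcases (show 0 ≤ i by omega).eq_or_lt with rfl | hi
      · exact ⟨C b' * 1, by rw [polyMap_C_mul, polyMap_one, hw.2.1]⟩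
      · rw [hw.2.2 i hi]
        exact Submodule.zero_mem _
    | succ n ih =>
      intro i hi
      rcases hi.eq_or_lt with rfl | hi
      · exact ⟨X * X ^ (n + 1), polyMap_X_mul ..⟩
      rw [pow_succ', polyMap_X_mul, ρ.comm_apply (by omega) le_rfl]
      refine Submodule.add_mem _ ?_ (Submodule.smul_mem _ _ (ih _ (by omega)))
      obtain ⟨f, hf⟩ := ih i (by omega)
      exact ⟨X * f, by rw [polyMap_X_mul, hf]⟩
  have hinv : ρ.Invariant (LinearMap.range (ρ.polyMap w₀)) := by
    rintro i hi _ ⟨f, rfl⟩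
    induction f using Polynomial.induction_on' with
    | add p q hp hq => rw [map_add, map_add]; exact Submodule.add_mem _ hp hq
    | monomial n c =>
      rw [← C_mul_X_pow_eq_monomial, polyMap_C_mul, map_smul]
      exact Submodule.smul_mem _ _ (hX n i hi)
  rcases hs.2 _ hinv with h | h
  · refine absurd ((Submodule.eq_bot_iff _).1 h w₀ ⟨1, polyMap_one ..⟩) hw.1
  · exact LinearMap.range_eq_top.1 h

lemma E_polyMap (ρ : WittRep W) (hO : ρ.InO) {w₀ : W} {b' : ℂ} (hw : ρ.IsHW w₀ b') (k : ℤ)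
    (f : ℂ[X]) : ρ.E k (ρ.polyMap w₀ f) =
      ρ.polyMap w₀ ((X + C ((k : ℂ) * b')) * f.comp (X - C (k : ℂ))) := by
  have hX : ∀ n : ℕ, ρ.E k (ρ.polyMap w₀ (X ^ n)) =
      ρ.polyMap w₀ ((X + C ((k : ℂ) * b')) * (X - C (k : ℂ)) ^ n) := by
    intro n
    induction n with
    | zero =>
      have hE : ρ.E k w₀ = ρ.d (-1) w₀ + ((k : ℂ) * b') • w₀ := by
        rw [ρ.E_eq_sum (n := 1) fun i hi => hw.2.2 i (by exact_mod_cast hi)]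
        simp [Finset.sum_range_succ, e_zero, e_one, hw.2.1, smul_smul]
      rw [pow_zero, pow_zero, polyMap_one, add_mul, map_add, polyMap_X_mul, polyMap_C_mul,
        polyMap_one, hE]
    | succ n ih =>
      rw [pow_succ', polyMap_X_mul, ρ.E_d_neg_one hO, ih, ← polyMap_X_mul, ← polyMap_C_mul,
        ← map_sub]
      congr 1
      ring
  induction f using Polynomial.induction_on' with
  | add p q hp hq => rw [map_add, ρ.E_add hO, hp, hq, add_comp, mul_add, map_add]
  | monomial n c =>
    rw [← C_mul_X_pow_eq_monomial, polyMap_C_mul, ρ.E_smul hO, hX, ← polyMap_C_mul]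
    congr 1
    simp only [mul_comp, C_comp, pow_comp, X_comp]
    ring

/-- The involution `f(X) ↦ f(c - X)` of the polynomial ring. -/
noncomputable def reflectEquiv (c : ℂ) : ℂ[X] ≃ₗ[ℂ] ℂ[X] :=
  LinearEquiv.ofInvolutive
    { toFun := fun f => f.comp (C c - X)
      map_add' := fun _ _ => add_comp
      map_smul' := fun _ _ => smul_comp _ _ _ }
    fun f => by simp [comp_assoc]

lemma reflectEquiv_apply (c : ℂ) (f : ℂ[X]) : reflectEquiv c f = f.comp (C c - X) := rfl

lemma degAct_polyMap (ρ : WittRep W) (hO : ρ.InO) {w₀ : W} {b' : ℂ} (hw : ρ.IsHW w₀ b')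
    (lam a b : ℂ) (k j : ℤ) (f : ℂ[X]) : ρ.degAct lam a b k j (ρ.polyMap w₀ f) =
      ρ.polyMap w₀ (C (lam ^ k) * ((X + C ((k : ℂ) * b')) * f.comp (X - C (k : ℂ))) - X * f +
        C (a + k * b + j) * f) := by
  rw [degAct, ρ.E_polyMap hO hw, ← polyMap_C_mul, ← polyMap_X_mul, ← polyMap_C_mul, ← map_sub,
    ← map_add]

/-- For highest weight modules the roles of the two parameters can be exchanged. -/
theorem exists_swap_equiv (ρ : WittRep W) (ρ₀ : WittRep W₀) (hO : ρ.InO) (hO₀ : ρ₀.InO)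
    (hnt : ¬ ρ.IsTrivial) (hnt₀ : ¬ ρ₀.IsTrivial) (hs : ρ.IsSimple) (hs₀ : ρ₀.IsSimple)
    {lam : ℂ} (hlam : lam ≠ 0) (a : ℂ) {b' b'₀ : ℂ} {w₀ : W} {w₀' : W₀}
    (hw : ρ.IsHW w₀ b') (hw' : ρ₀.IsHW w₀' b'₀) :
    ∃ φ : (ℤ →₀ W) ≃ₗ[ℂ] (ℤ →₀ W₀),
      (∀ (k : ℤ) (f : ℤ →₀ W), φ (ρ.Lact lam a (b'₀ + 1) k f) =
        ρ₀.Lact lam⁻¹ a (b' + 1) k (φ f)) ∧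
      ∀ j i : ℤ, φ (Finsupp.single j w₀) i = Finsupp.single j (lam⁻¹ ^ j • w₀') i := by
  let Θ : ℂ[X] ≃ₗ[ℂ] W := LinearEquiv.ofBijective (ρ.polyMap w₀)
    ⟨ρ.polyMap_injective hO hnt hs hw.1, ρ.polyMap_surjective hs hw⟩
  let Θ₀ : ℂ[X] ≃ₗ[ℂ] W₀ := LinearEquiv.ofBijective (ρ₀.polyMap w₀')
    ⟨ρ₀.polyMap_injective hO₀ hnt₀ hs₀ hw'.1, ρ₀.polyMap_surjective hs₀ hw'⟩
  let θ : ℤ → W ≃ₗ[ℂ] W₀ := fun j => Θ.symm ≪≫ₗ reflectEquiv (a + j) ≪≫ₗ Θ₀ ≪≫ₗ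
    LinearEquiv.smulOfNeZero ℂ W₀ (lam⁻¹ ^ j) (zpow_ne_zero _ (inv_ne_zero hlam))
  have hθ : ∀ j f, θ j (ρ.polyMap w₀ f) =
      lam⁻¹ ^ j • ρ₀.polyMap w₀' (f.comp (C (a + j) - X)) := by
    intro j f
    have : Θ.symm (ρ.polyMap w₀ f) = f := Θ.symm_apply_apply f
    simp only [θ, LinearEquiv.trans_apply, this, reflectEquiv_apply]
    rfl
  refine ⟨gradedEquiv θ, gradedEquiv_Lact ρ ρ₀ hO hO₀ _ _ _ _ _ _ θ fun k j w => ?_,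
    fun j i => ?_⟩
  · obtain ⟨f, rfl⟩ := ρ.polyMap_surjective hs hw w
    rw [ρ.degAct_polyMap hO hw, hθ, hθ, ρ₀.degAct_smul hO₀, ρ₀.degAct_polyMap hO₀ hw',
      ← polyMap_C_mul, ← polyMap_C_mul]
    congr 1
    have h1 : (X - C (k : ℂ)).comp (C (a + ((k + j : ℤ) : ℂ)) - X) = C (a + (j : ℂ)) - X := by
      simp only [sub_comp, X_comp, C_comp, Int.cast_add, C_add]
      ring
    have h2 : (C (a + (j : ℂ)) - X).comp (X - C (k : ℂ)) = C (a + ((k + j : ℤ) : ℂ)) - X := by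
      rw [sub_comp, X_comp, C_comp, Int.cast_add, C_add, C_add, C_add]
      ring
    have h3 : (C (lam⁻¹ ^ (k + j)) * C (lam ^ k) : ℂ[X]) = C (lam⁻¹ ^ j) := by
      rw [← C_mul, zpow_add₀ (inv_ne_zero hlam), inv_zpow, mul_right_comm,
        inv_mul_cancel₀ (zpow_ne_zero _ hlam), one_mul]
    have h4 : (C (lam⁻¹ ^ (k + j)) : ℂ[X]) = C (lam⁻¹ ^ j) * C (lam⁻¹ ^ k) := by
      rw [← C_mul, zpow_add₀ (inv_ne_zero hlam), mul_comm]
    have h5 : (f.comp (X - C (k : ℂ))).comp (C (a + ((k + j : ℤ) : ℂ)) - X) =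
        f.comp (C (a + (j : ℂ)) - X) := by rw [comp_assoc, h1]
    have h6 : (f.comp (C (a + (j : ℂ)) - X)).comp (X - C (k : ℂ)) =
        f.comp (C (a + ((k + j : ℤ) : ℂ)) - X) := by rw [comp_assoc, h2]
    rw [add_comp, sub_comp, mul_comp, mul_comp, mul_comp, mul_comp, h5, h6, add_comp, X_comp,
      C_comp, C_comp, C_comp]
    generalize f.comp (C (a + (j : ℂ)) - X) = p
    generalize f.comp (C (a + ((k + j : ℤ) : ℂ)) - X) = q
    simp only [Int.cast_add, C_add, C_mul, C_1]
    linear_combination (C a + C (k : ℂ) + C (j : ℂ) - X + C (k : ℂ) * C b') * p * h3 +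
      (X + C (k : ℂ) * C b'₀) * q * h4
  · classical
    rw [gradedEquiv_apply, Finsupp.single_apply, Finsupp.single_apply]
    split_ifs with h
    · subst h
      have := hθ j 1
      rwa [polyMap_one, one_comp, polyMap_one] at this
    · exact map_zero _

end HighestWeight

lemma actSimple_of_equiv {V V' : Type*} [AddCommGroup V] [Module ℂ V] [AddCommGroup V']
    [Module ℂ V'] {act : ℤ → V → V} {act' : ℤ → V' → V'} (φ : V ≃ₗ[ℂ] V')
    (hφ : ∀ k f, φ (act k f) = act' k (φ f)) (h : ActSimple act) : ActSimple act' := by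
  obtain ⟨⟨v, hv⟩, hM⟩ := h
  refine ⟨⟨φ v, by simpa using hv⟩, fun M hMi => ?_⟩
  have hcomap : (M.comap (φ : V →ₗ[ℂ] V')).map (φ : V →ₗ[ℂ] V') = M :=
    Submodule.map_comap_eq_of_surjective φ.surjective M
  rcases hM (M.comap (φ : V →ₗ[ℂ] V')) fun k u hu => by
    rw [Submodule.mem_comap] at hu ⊢
    exact (hφ k u).symm ▸ hMi k _ hu with h | h
  · left
    rw [← hcomap, h, Submodule.map_bot]
  · right
    rw [← hcomap, h, Submodule.map_top, LinearMap.range_eq_top]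
    exact φ.surjective

/-- The module `L(W, -1, a, b' + 1)` of a highest weight module of weight `b'` is not simple. -/
lemma not_isHW_of_actSimple_neg_one (ρ : WittRep W) (hO : ρ.InO) (hnt : ¬ ρ.IsTrivial)
    (hs : ρ.IsSimple) {a b : ℂ} (hL : ActSimple (ρ.Lact (-1) a b)) (w₀ : W) :
    ¬ ρ.IsHW w₀ (b - 1) := by
  intro hw
  obtain ⟨φ, hφ, hφw⟩ := ρ.exists_swap_equiv ρ hO hO hnt hnt hs hs
    (neg_ne_zero.2 one_ne_zero) a hw hw
  rw [sub_add_cancel, inv_neg_one] at hφ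
  have hinv : ActInvariant (ρ.Lact (-1) a b)
      (LinearMap.ker ((φ : (ℤ →₀ W) →ₗ[ℂ] (ℤ →₀ W)) - LinearMap.id)) := by
    intro k u hu
    rw [LinearMap.mem_ker, LinearMap.sub_apply, LinearMap.id_apply, sub_eq_zero] at hu ⊢
    exact (hφ k u).trans (congrArg _ hu)
  rcases hL.2 _ hinv with h | h
  · have hmem : Finsupp.single (0 : ℤ) w₀ ∈
        LinearMap.ker ((φ : (ℤ →₀ W) →ₗ[ℂ] (ℤ →₀ W)) - LinearMap.id) := by
      rw [LinearMap.mem_ker]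
      ext i
      simp [hφw 0 i]
    rw [h, Submodule.mem_bot, Finsupp.single_eq_zero] at hmem
    exact hw.1 hmem
  · have hmem : Finsupp.single (1 : ℤ) w₀ ∈
        LinearMap.ker ((φ : (ℤ →₀ W) →ₗ[ℂ] (ℤ →₀ W)) - LinearMap.id) := h ▸ Submodule.mem_top
    rw [LinearMap.mem_ker] at hmem
    have h1 := DFunLike.congr_fun hmem 1
    simp only [LinearMap.sub_apply, LinearEquiv.coe_coe, LinearMap.id_apply, Finsupp.sub_apply,
      hφw, Finsupp.single_eq_same, Finsupp.zero_apply, zpow_one, inv_neg_one, neg_smul,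
      one_smul] at h1
    have h2 : (-2 : ℂ) • w₀ = 0 := by rw [← h1]; module
    exact hw.1 ((smul_eq_zero.1 h2).resolve_left (by norm_num))

end WittRep


namespace WittRep

variable {W W₀ : Type*} [AddCommGroup W] [Module ℂ W] [AddCommGroup W₀] [Module ℂ W₀]

lemma isPolyFun_E_E (ρ : WittRep W) (hO : ρ.InO) (l : ℤ) (w : W) :
    IsPolyFun fun m : ℤ => ρ.E (l - m) (ρ.E m w) := by
  obtain ⟨n, hn⟩ := hO w
  have hE : ∀ m : ℤ, ρ.E (l - m) (ρ.E m w) =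
      ∑ i ∈ Finset.range (n + 1), (m : ℂ) ^ i • ρ.E (l - m) (ρ.e i w) := fun m => by
    rw [ρ.E_eq_sum hn, ← ρ.ELin_apply hO, map_sum]
    simp only [map_smul, ELin_apply]
  simp only [hE]
  have hpow : ∀ (v : W) (n : ℕ), IsPolyFun fun m : ℤ => (m : ℂ) ^ n • ρ.E (l - m) v := by
    intro v n
    induction n with
    | zero => simpa [sub_eq_add_neg] using ρ.isPolyFun_E_affine hO l (-1) v
    | succ n ih => simpa [smul_smul, ← pow_succ'] using ih.affine_smul 0 1
  exact IsPolyFun.sum _ fun i _ => hpow _ i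

/-- The exponential-polynomial expansion in `m` of the action of `d_{l-m} d_m`. -/
lemma exists_degAct_degAct_eq (ρ : WittRep W) (hO : ρ.InO) {lam : ℂ} (hlam : lam ≠ 0) (a b : ℂ)
    {N : ℕ} {w : W} (h : ∀ i : ℤ, (N : ℤ) ≤ i → ρ.d i w = 0) (l j : ℤ) :
    ∃ G₀ G₁ G₂ : ℤ → W, IsPolyFun G₀ ∧ HasTopCoeff (N + 1) ((1 - b) • ρ.e N w) G₁ ∧
      HasTopCoeff (N + 1) (-((1 - b) * lam ^ l * (-1) ^ N) • ρ.e N w) G₂ ∧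
      ∀ m, ρ.degAct lam a b (l - m) (m + j) (ρ.degAct lam a b m j w) =
        G₀ m + lam ^ m • G₁ m + lam⁻¹ ^ m • G₂ m := by
  have h1 : HasTopCoeff N (ρ.e N w) fun m : ℤ => ρ.E m w := by
    simpa using ρ.hasTopCoeff_E_affine h 0 1
  have h2 : HasTopCoeff N ((-1 : ℂ) ^ N • ρ.e N w) fun m : ℤ => ρ.E (l - m) w := by
    simpa [sub_eq_add_neg] using ρ.hasTopCoeff_E_affine h l (-1)
  refine ⟨fun m => lam ^ l • ρ.E (l - m) (ρ.E m w) + ρ.d (-1) (ρ.d (-1) w) +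
      ((-(a + j) - (a + l * b + j) : ℂ) + (-1 : ℂ) * m) • ρ.d (-1) w +
      ((a + l * b + j : ℂ) + (1 - b) * m) • ((a + j : ℂ) + b * m) • w,
    fun m => (-ρ.d (-1)) (ρ.E m w) + ((a + l * b + j : ℂ) + (1 - b) * m) • ρ.E m w,
    fun m => lam ^ l • ((-ρ.d (-1)) (ρ.E (l - m) w) +
      ((a + j + l : ℂ) + (b - 1) * m) • ρ.E (l - m) w), ?_, ?_, ?_, fun m => ?_⟩
  · exact ((((ρ.isPolyFun_E_E hO l w).map (LinearMap.lsmul ℂ W (lam ^ l))).add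
      (IsPolyFun.const _)).add ((IsPolyFun.const _).affine_smul _ _)).add
      (((IsPolyFun.const w).affine_smul _ _).affine_smul _ _)
  · simpa using ((h1.map (-ρ.d (-1))).lift N.lt_succ_self).add (h1.affine_smul _ (1 - b))
  · convert (((h2.map (-ρ.d (-1))).lift N.lt_succ_self).add
      (h2.affine_smul (a + j + l) (b - 1))).smul (lam ^ l) using 1
    module
  · have hz : lam ^ (l - m) = lam ^ l * lam⁻¹ ^ m := by
      rw [zpow_sub₀ hlam, inv_zpow, div_eq_mul_inv]
    have hu : lam ^ l * lam⁻¹ ^ m * lam ^ m = lam ^ l := by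
      rw [inv_zpow, inv_mul_cancel_right₀ (zpow_ne_zero _ hlam)]
    have hE : ρ.E (l - m) (ρ.degAct lam a b m j w) = lam ^ m • ρ.E (l - m) (ρ.E m w) -
        (ρ.d (-1) (ρ.E (l - m) w) - ((l - m : ℤ) : ℂ) • ρ.E (l - m) w) +
        (a + m * b + j) • ρ.E (l - m) w := by
      rw [← ρ.ELin_apply hO, degAct, map_add, map_sub, map_smul, map_smul, ELin_apply, ELin_apply,
        ELin_apply, ρ.E_d_neg_one hO]
    have hc : (lam ^ l * lam⁻¹ ^ m) • lam ^ m • ρ.E (l - m) (ρ.E m w) =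
        lam ^ l • ρ.E (l - m) (ρ.E m w) := by rw [smul_smul, hu]
    rw [degAct, hE, hz, smul_add, smul_sub, hc]
    simp only [degAct, map_add, map_sub, map_smul, LinearMap.neg_apply]
    push_cast
    module

/-- The coefficient attached to the exponential `β ^ m` in the top degree part of
`d_{l-m} d_m` on `L(W, λ, a, b)`. -/
noncomputable def topCoeff (lam b β : ℂ) (l : ℤ) (N : ℕ) : ℂ :=
  (if lam = β then 1 - b else 0) - if lam⁻¹ = β then (1 - b) * lam ^ l * (-1) ^ N else 0

lemma topCoeff_smul_eq (ρ : WittRep W) (ρ₀ : WittRep W₀) (hO : ρ.InO) (hO₀ : ρ₀.InO)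
    {lam lam₀ : ℂ} (hlam : lam ≠ 0) (hlam₀ : lam₀ ≠ 0) (a b b₀ : ℂ) (Φ : ℤ → W →ₗ[ℂ] W₀)
    (hΦ : ∀ k j w, Φ (k + j) (ρ.degAct lam a b k j w) = ρ₀.degAct lam₀ a b₀ k j (Φ j w))
    {N : ℕ} {w : W} {j : ℤ} (h : ∀ i : ℤ, (N : ℤ) ≤ i → ρ.d i w = 0)
    (h₀ : ∀ i : ℤ, (N : ℤ) ≤ i → ρ₀.d i (Φ j w) = 0) {β : ℂ} (hβ : β ≠ 1) (l : ℤ) :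
    topCoeff lam b β l N • Φ (l + j) (ρ.e N w) =
      topCoeff lam₀ b₀ β l N • ρ₀.e N (Φ j w) := by
  obtain ⟨G₀, G₁, G₂, hG₀, hG₁, hG₂, hG⟩ := ρ.exists_degAct_degAct_eq hO hlam a b h l j
  obtain ⟨H₀, H₁, H₂, hH₀, hH₁, hH₂, hH⟩ := ρ₀.exists_degAct_degAct_eq hO₀ hlam₀ a b₀ h₀ l j
  have hsep := expPoly_separate ![1, lam, lam⁻¹, lam₀, lam₀⁻¹]
    (fun i => by fin_cases i <;> simp [hlam, hlam₀])
    ![fun m => Φ (l + j) (G₀ m) + (-1 : ℂ) • H₀ m, fun m => Φ (l + j) (G₁ m),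
      fun m => Φ (l + j) (G₂ m), fun m => (-1 : ℂ) • H₁ m, fun m => (-1 : ℂ) • H₂ m]
    (fun i => by
      fin_cases i
      · exact (hG₀.map _).add (hH₀.map (LinearMap.lsmul ℂ W₀ (-1)))
      · exact (hG₁.map _).isPolyFun
      · exact (hG₂.map _).isPolyFun
      · exact (hH₁.smul _).isPolyFun
      · exact (hH₂.smul _).isPolyFun)
    (fun m => by
      have h1 : Φ (l + j) (G₀ m + lam ^ m • G₁ m + lam⁻¹ ^ m • G₂ m) =
          H₀ m + lam₀ ^ m • H₁ m + lam₀⁻¹ ^ m • H₂ m := by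
        rw [← hG, ← hH, ← hΦ m j w, ← hΦ (l - m) (m + j),
          show l - m + (m + j) = l + j by ring]
      simp only [map_add, map_smul] at h1
      simp only [Fin.sum_univ_five, Matrix.cons_val, one_zpow, one_smul]
      rw [← sub_eq_zero] at h1
      rw [← h1]
      module) β
  have hite : ∀ (p : Prop) [Decidable p] {M : ℕ} {v : W₀} {f : ℤ → W₀}, HasTopCoeff M v f →
      HasTopCoeff M (if p then v else 0) fun m => if p then f m else 0 := by
    intro p _ M v f hf
    split_ifs
    · exact hf
    · exact HasTopCoeff.zero M
  have htop := ((((hite (lam = β) (hG₁.map (Φ (l + j)))).add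
    (hite (lam⁻¹ = β) (hG₂.map (Φ (l + j))))).add (hite (lam₀ = β) (hH₁.smul (-1)))).add
    (hite (lam₀⁻¹ = β) (hH₂.smul (-1)))).eq_zero fun m => by
      have := hsep m
      rw [Fin.sum_univ_five, if_neg (c := ![1, lam, lam⁻¹, lam₀, lam₀⁻¹] 0 = β) hβ.symm,
        zero_add] at this
      exact this
  rw [← sub_eq_zero, ← htop]
  simp only [topCoeff, map_smul]
  split_ifs <;> module

end WittRep

namespace WittRep

variable {W W₀ : Type*} [AddCommGroup W] [Module ℂ W] [AddCommGroup W₀] [Module ℂ W₀]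

lemma eq_neg_one_of_inv_eq {lam : ℂ} (hlam : lam ≠ 0) (h1 : lam ≠ 1) (h : lam⁻¹ = lam) :
    lam = -1 := by
  have h2 : lam * lam = 1 := by
    nth_rewrite 1 [← h]
    exact inv_mul_cancel₀ hlam
  exact (mul_self_eq_one_iff.1 h2).resolve_left h1

lemma topCoeff_neg_one (b : ℂ) (N : ℕ) (m : ℤ) :
    topCoeff (-1) b (-1) (N + 1 + 2 * m) N = 2 * (1 - b) := by
  have h1 : (-1 : ℂ) ^ ((N : ℤ) + 1 + 2 * m) * (-1) ^ N = -1 := by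
    rw [zpow_add₀ (by norm_num), zpow_add₀ (by norm_num), zpow_mul, zpow_natCast, zpow_one]
    have : ((-1 : ℂ) ^ (2 : ℤ)) = 1 := by norm_num
    rw [this, one_zpow, mul_one, mul_right_comm, ← mul_pow]
    norm_num
  rw [topCoeff, if_pos rfl, if_pos inv_neg_one, mul_assoc, h1]
  ring

lemma topCoeff_self_ne_zero {lam b : ℂ} (hlam : lam ≠ 0) (h1 : lam ≠ 1) (hb : b ≠ 1) (N : ℕ) :
    topCoeff lam b lam (N + 1) N ≠ 0 := by
  have hb' : 1 - b ≠ 0 := sub_ne_zero.2 hb.symm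
  by_cases h : lam⁻¹ = lam
  · have := topCoeff_neg_one b N 0
    rw [mul_zero, add_zero] at this
    rw [eq_neg_one_of_inv_eq hlam h1 h, this]
    exact mul_ne_zero two_ne_zero hb'
  · rw [topCoeff, if_pos rfl, if_neg h, sub_zero]
    exact hb'

/-- A graded isomorphism has a vector on which its components take a two-term exponential form. -/
lemma exists_two_term (ρ : WittRep W) (ρ₀ : WittRep W₀) (hO : ρ.InO) (hO₀ : ρ₀.InO)
    (hnt : ¬ ρ.IsTrivial) (hnt₀ : ¬ ρ₀.IsTrivial) (hs : ρ.IsSimple) (hs₀ : ρ₀.IsSimple)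
    {lam lam₀ : ℂ} (hlam : lam ≠ 0) (hlam₀ : lam₀ ≠ 0) (hlam1 : lam ≠ 1) (hlam₀1 : lam₀ ≠ 1)
    (a : ℂ) {b b₀ : ℂ} (hb : b ≠ 1) (hb₀ : b₀ ≠ 1) (Φ : ℤ → W →ₗ[ℂ] W₀)
    (hinj : ∀ j, Function.Injective (Φ j))
    (hΦ : ∀ k j w, Φ (k + j) (ρ.degAct lam a b k j w) = ρ₀.degAct lam₀ a b₀ k j (Φ j w)) :
    ∃ w ≠ 0, ∃ s δ : W₀, ∀ i : ℤ, Φ i w = s + lam₀ ^ i • δ := by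
  obtain ⟨w, hw⟩ := hs.1
  obtain ⟨r, hr, hrv⟩ := ρ.exists_order hO hnt hs hw
  have hrv₀ : ∀ j : ℤ, ∀ i : ℤ, (r : ℤ) ≤ i → ρ₀.d i (Φ j w) = 0 := by
    intro j
    obtain ⟨r₀, hr₀, hr₀v⟩ := ρ₀.exists_order hO₀ hnt₀ hs₀
      ((map_ne_zero_iff (Φ j) (hinj j)).2 hw)
    rcases le_or_gt r₀ r with hle | hlt
    · exact ρ₀.vanish_mono hle hr₀v
    · have := topCoeff_smul_eq ρ ρ₀ hO hO₀ hlam hlam₀ a b b₀ Φ hΦ (ρ.vanish_mono hlt.le hrv) hr₀v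
        hlam₀1 (r₀ + 1)
      rw [ρ.e_eq_zero_of_lt hrv hlt, map_zero, smul_zero, eq_comm, smul_eq_zero] at this
      exact absurd this (not_or.2 ⟨topCoeff_self_ne_zero hlam₀ hlam₀1 hb₀ r₀, hr₀⟩)
  have key : ∀ (β : ℂ), β ≠ 1 → ∀ l j : ℤ, topCoeff lam b β l r • Φ (l + j) (ρ.e r w) =
      topCoeff lam₀ b₀ β l r • ρ₀.e r (Φ j w) := fun β hβ l j =>
    topCoeff_smul_eq ρ ρ₀ hO hO₀ hlam hlam₀ a b b₀ Φ hΦ hrv (hrv₀ j) hβ l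
  have hb' : 1 - b ≠ 0 := sub_ne_zero.2 hb.symm
  have hor : lam₀ = lam ∨ lam₀⁻¹ = lam := by
    by_contra hne
    rw [not_or] at hne
    have h0 := key lam hlam1 (r + 1) 0
    have h1 : topCoeff lam₀ b₀ lam (r + 1) r = 0 := by
      rw [topCoeff, if_neg hne.1, if_neg hne.2, sub_zero]
    rw [h1, zero_smul, smul_eq_zero] at h0
    exact h0.elim (topCoeff_self_ne_zero hlam hlam1 hb r)
      ((map_ne_zero_iff _ (hinj _)).2 hr)
  refine ⟨ρ.e r w, hr, ?_⟩
  by_cases hinv : lam⁻¹ = lam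
  · obtain rfl := eq_neg_one_of_inv_eq hlam hlam1 hinv
    obtain rfl : lam₀ = -1 := hor.elim id fun h => by rw [← inv_inv lam₀, h, inv_neg_one]
    have hper : ∀ i m : ℤ, Φ (i + 2 * m) (ρ.e r w) = Φ i (ρ.e r w) := by
      intro i m
      have h1 := key (-1) hlam1 (r + 1 + 2 * m) (i - r - 1)
      have h2 := key (-1) hlam1 (r + 1 + 2 * 0) (i - r - 1)
      rw [topCoeff_neg_one, topCoeff_neg_one] at h1 h2
      have h3 := smul_right_injective W₀ (mul_ne_zero two_ne_zero hb') (h1.trans h2.symm)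
      rwa [show (r : ℤ) + 1 + 2 * m + (i - r - 1) = i + 2 * m by ring,
        show (r : ℤ) + 1 + 2 * 0 + (i - r - 1) = i by ring] at h3
    refine ⟨(2 : ℂ)⁻¹ • (Φ 0 (ρ.e r w) + Φ 1 (ρ.e r w)),
      (2 : ℂ)⁻¹ • (Φ 0 (ρ.e r w) - Φ 1 (ρ.e r w)), fun i => ?_⟩
    rcases Int.even_or_odd' i with ⟨m, rfl | rfl⟩
    · rw [← zero_add (2 * m), hper, zero_add, zpow_mul,
        show ((-1 : ℂ) ^ (2 : ℤ)) = 1 by norm_num, one_zpow]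
      module
    · rw [add_comm, hper, zpow_add₀ (by norm_num), zpow_mul,
        show ((-1 : ℂ) ^ (2 : ℤ)) = 1 by norm_num, one_zpow, zpow_one]
      module
  · have hc : ∀ l, Φ l (ρ.e r w) =
        (1 - b)⁻¹ • topCoeff lam₀ b₀ lam l r • ρ₀.e r (Φ 0 w) := by
      intro l
      have h1 := key lam hlam1 l 0
      rw [topCoeff, if_pos rfl, if_neg hinv, sub_zero, add_zero] at h1
      rw [← h1, inv_smul_smul₀ hb']
    rcases hor with rfl | rfl
    · refine ⟨(1 - b)⁻¹ • (1 - b₀) • ρ₀.e r (Φ 0 w), 0, fun i => ?_⟩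
      rw [hc, topCoeff, if_pos rfl, if_neg hinv, sub_zero, smul_zero, add_zero]
    · refine ⟨0, (1 - b)⁻¹ • (-((1 - b₀) * (-1) ^ r)) • ρ₀.e r (Φ 0 w), fun i => ?_⟩
      rw [hc, topCoeff, if_neg (fun h => hinv (by rw [inv_inv, ← h])), if_pos rfl]
      module

section TwoTerm

variable (ρ : WittRep W) (ρ₀ : WittRep W₀) (hO : ρ.InO) (hO₀ : ρ₀.InO)
  {lam lam₀ : ℂ} (hlam : lam ≠ 0) (hlam₀ : lam₀ ≠ 0) {a b b₀ : ℂ} {Φ : ℤ → W →ₗ[ℂ] W₀}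
  (hΦ : ∀ k j w, Φ (k + j) (ρ.degAct lam a b k j w) = ρ₀.degAct lam₀ a b₀ k j (Φ j w))
  {w : W} {s δ : W₀} (hw : ∀ i : ℤ, Φ i w = s + lam₀ ^ i • δ)

include hO hO₀ hlam hlam₀ hΦ hw

lemma two_term_separate (n : ℤ) (β : ℂ) (k : ℤ) :
    (if lam = β then Φ n (ρ.E k w) else 0) +
      (if 1 = β then (-Φ n (ρ.d (-1) w) + (a + n + (b - 1) * k) • Φ n w + ρ₀.d (-1) s -
        (a + n + (b₀ - 1) * k) • s - lam₀ ^ n • ρ₀.E k δ) else 0) =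
    (if lam₀ = β then ρ₀.E k s else 0) +
      (if lam₀⁻¹ = β then lam₀ ^ n • ((a + n + (b₀ - 1) * k) • δ - ρ₀.d (-1) δ) else 0) := by
  have hsep := expPoly_separate ![lam, 1, lam₀, lam₀⁻¹]
    (fun i => by fin_cases i <;> simp [hlam, hlam₀])
    ![fun k => Φ n (ρ.E k w), fun k => -Φ n (ρ.d (-1) w) + (a + n + (b - 1) * k) • Φ n w +
        ρ₀.d (-1) s + (-(a + n) + -(b₀ - 1) * k) • s + (-lam₀ ^ n) • ρ₀.E k δ,
      fun k => (-1 : ℂ) • ρ₀.E k s,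
      fun k => (-lam₀ ^ n) • ((a + n + (b₀ - 1) * k) • δ + -ρ₀.d (-1) δ)]
    (fun i => by
      fin_cases i
      · exact (ρ.isPolyFun_E hO w).map _
      · exact ((((IsPolyFun.const _).add ((IsPolyFun.const _).affine_smul _ _)).add
          (IsPolyFun.const _)).add ((IsPolyFun.const _).affine_smul _ _)).add
          ((ρ₀.isPolyFun_E hO₀ δ).map (LinearMap.lsmul ℂ W₀ _))
      · exact (ρ₀.isPolyFun_E hO₀ s).map (LinearMap.lsmul ℂ W₀ _)
      · exact (((IsPolyFun.const _).affine_smul _ _).add (IsPolyFun.const _)).map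
          (LinearMap.lsmul ℂ W₀ _))
    (fun k => by
      have h1 := hΦ k (n - k) w
      have hz : lam₀ ^ (n - k) = lam₀ ^ n * lam₀⁻¹ ^ k := by
        rw [zpow_sub₀ hlam₀, inv_zpow, div_eq_mul_inv]
      have hu : lam₀ ^ k * (lam₀ ^ n * lam₀⁻¹ ^ k) = lam₀ ^ n := by
        rw [mul_left_comm, inv_zpow, mul_inv_cancel₀ (zpow_ne_zero _ hlam₀), mul_one]
      have hE : lam₀ ^ k • (lam₀ ^ n * lam₀⁻¹ ^ k) • ρ₀.E k δ = lam₀ ^ n • ρ₀.E k δ := by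
        rw [smul_smul, hu]
      rw [add_sub_cancel, hw, degAct, degAct, ρ₀.E_add hO₀, ρ₀.E_smul hO₀, hz, smul_add, hE,
        map_add, map_sub, map_smul, map_smul, ← sub_eq_zero] at h1
      simp only [Fin.sum_univ_four, Matrix.cons_val, one_zpow, one_smul]
      rw [← h1]
      simp only [map_add, map_smul]
      push_cast
      module) β k
  rw [Fin.sum_univ_four] at hsep
  refine sub_eq_zero.1 (Eq.trans ?_ hsep)
  change _ = (if lam = β then Φ n (ρ.E k w) else 0) +
    (if 1 = β then (-Φ n (ρ.d (-1) w) + (a + n + (b - 1) * k) • Φ n w +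
        ρ₀.d (-1) s + (-(a + n) + -(b₀ - 1) * k) • s + (-lam₀ ^ n) • ρ₀.E k δ) else 0) +
    (if lam₀ = β then (-1 : ℂ) • ρ₀.E k s else 0) +
    (if lam₀⁻¹ = β then (-lam₀ ^ n) • ((a + n + (b₀ - 1) * k) • δ + -ρ₀.d (-1) δ) else 0)
  split_ifs <;> module

lemma two_term_highest_weight (hlam1 : lam ≠ 1) (hlam₀1 : lam₀ ≠ 1) :
    ρ₀.d 0 δ = (b - 1) • δ ∧ (∀ i : ℤ, 1 ≤ i → ρ₀.d i δ = 0) ∧ (b - b₀) • s = 0 := by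
  have key : ∀ n : ℤ, lam₀ ^ n • ρ₀.d 0 δ = (b - 1) • Φ n w - (b₀ - 1) • s ∧
      ∀ i : ℤ, 1 ≤ i → lam₀ ^ n • ρ₀.d i δ = 0 := by
    intro n
    have hcc := coeff_compare ρ₀ ρ₀ hO₀ hO₀ (lam₀ ^ n • LinearMap.id) (0 : W₀ →ₗ[ℂ] W₀) δ 0
      (-Φ n (ρ.d (-1) w) + (a + n) • Φ n w + ρ₀.d (-1) s - (a + n) • s)
      ((b - 1) • Φ n w - (b₀ - 1) • s) fun k => by
        have h1 := two_term_separate ρ ρ₀ hO hO₀ hlam hlam₀ hΦ hw n 1 k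
        rw [if_neg hlam1, if_pos rfl, if_neg hlam₀1, if_neg (by simpa using hlam₀1), zero_add,
          zero_add] at h1
        simp only [LinearMap.smul_apply, LinearMap.id_apply, LinearMap.zero_apply]
        rw [zero_add, ← sub_eq_zero, ← neg_eq_zero, ← h1]
        module
    simpa using hcc.2
  have h0 := (key 0).1
  have h1 := (key 1).1
  rw [hw, zpow_zero, one_smul, one_smul] at h0
  rw [hw, zpow_one, h0] at h1
  have hbs : (b - b₀) • s = 0 := by
    refine (smul_eq_zero.1 (?_ : (lam₀ - 1) • (b - b₀) • s = 0)).resolve_left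
      (sub_ne_zero.2 hlam₀1)
    rw [← sub_eq_zero] at h1
    rw [← h1]
    module
  refine ⟨?_, fun i hi => by simpa using (key 0).2 i hi, hbs⟩
  rw [h0, ← sub_eq_zero, ← hbs]
  module

end TwoTerm

end WittRep

namespace WittRep

variable {W W₀ : Type*} [AddCommGroup W] [Module ℂ W] [AddCommGroup W₀] [Module ℂ W₀]

/-- Classification of the families of degree components of isomorphisms
`L(W, λ, a, b) ≅ L(W₀, λ₀, a, b₀)`. -/
theorem graded_classification (ρ : WittRep W) (ρ₀ : WittRep W₀) (hO : ρ.InO) (hO₀ : ρ₀.InO)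
    (hnt : ¬ ρ.IsTrivial) (hnt₀ : ¬ ρ₀.IsTrivial) (hs : ρ.IsSimple) (hs₀ : ρ₀.IsSimple)
    {lam lam₀ : ℂ} (hlam : lam ≠ 0) (hlam₀ : lam₀ ≠ 0) {a b b₀ : ℂ}
    (hL : ActSimple (ρ.Lact lam a b)) (hL₀ : ActSimple (ρ₀.Lact lam₀ a b₀))
    {Φ : ℤ → W →ₗ[ℂ] W₀} (hbij : ∀ j, Function.Bijective (Φ j))
    (hΦ : ∀ k j w, Φ (k + j) (ρ.degAct lam a b k j w) = ρ₀.degAct lam₀ a b₀ k j (Φ j w)) :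
    ((∃ ψ : W ≃ₗ[ℂ] W₀, ∀ i : ℤ, -1 ≤ i → ∀ w : W, ψ (ρ.d i w) = ρ₀.d i (ψ w)) ∧
        lam = lam₀ ∧ b = b₀) ∨
      (∃ b' b'₀ : ℂ, (∃ w₀ : W, ρ.IsHW w₀ b') ∧ (∃ w₀' : W₀, ρ₀.IsHW w₀' b'₀) ∧
        lam₀ = lam⁻¹ ∧ b = b'₀ + 1 ∧ b₀ = b' + 1) := by
  have hlam1 := ρ.lam_ne_one_of_actSimple hO lam a b hnt hs hL
  have hlam₀1 := ρ₀.lam_ne_one_of_actSimple hO₀ lam₀ a b₀ hnt₀ hs₀ hL₀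
  have hlam₀i1 : lam₀⁻¹ ≠ 1 := by simpa using hlam₀1
  have hb₀ := ρ₀.b_ne_one_of_actSimple hO₀ lam₀ a b₀ hnt₀ hs₀ hL₀
  obtain ⟨w, hw0, s, δ, hw⟩ := exists_two_term ρ ρ₀ hO hO₀ hnt hnt₀ hs hs₀ hlam hlam₀ hlam1
    hlam₀1 a (ρ.b_ne_one_of_actSimple hO lam a b hnt hs hL) hb₀ Φ (fun j => (hbij j).1) hΦ
  obtain ⟨hδ0, hδ, hbs⟩ := two_term_highest_weight ρ ρ₀ hO hO₀ hlam hlam₀ hΦ hw hlam1 hlam₀1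
  have hsep := two_term_separate ρ ρ₀ hO hO₀ hlam hlam₀ hΦ hw
  have heq : s ≠ 0 → (lam₀⁻¹ ≠ lam₀ ∨ δ = 0) → lam = lam₀ := by
    intro hs0 h
    by_contra hne
    refine hs0 (ρ₀.eq_zero_of_forall_d hnt₀ hs₀ fun i hi => ?_)
    have hE : ∀ k : ℤ, ρ₀.E k s = 0 := fun k => by
      have h1 := hsep 0 lam₀ k
      rw [if_neg hne, if_neg hlam₀1.symm, if_pos rfl] at h1
      rcases h with h | rfl
      · rw [if_neg h] at h1
        simpa using h1.symm
      · simpa using h1.symm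
    have hcc := coeff_compare ρ₀ ρ₀ hO₀ hO₀ LinearMap.id (0 : W₀ →ₗ[ℂ] W₀) s 0 0 0
      fun k => by simp [hE k]
    rcases hi.eq_or_lt with rfl | hi
    · simpa using hcc.1
    rcases (show 0 ≤ i by omega).eq_or_lt with rfl | hi
    · simpa using hcc.2.1
    · simpa using hcc.2.2 i hi
  have hinv : δ ≠ 0 → (lam₀⁻¹ ≠ lam₀ ∨ s = 0) → lam = lam₀⁻¹ := by
    intro hδ0 h
    by_contra hne
    have hk : ∀ k : ℤ, (a + (b₀ - 1) * k) • δ - ρ₀.d (-1) δ = 0 := fun k => by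
      have h1 := hsep 0 lam₀⁻¹ k
      rw [if_neg hne, if_neg hlam₀i1.symm, if_pos rfl] at h1
      rcases h with h | rfl
      · rw [if_neg (Ne.symm h)] at h1
        simpa using h1.symm
      · simpa [← ρ₀.ELin_apply hO₀] using h1.symm
    refine (smul_ne_zero (sub_ne_zero.2 hb₀) hδ0) ?_
    have h2 := (hk 1).trans (hk 0).symm
    rw [← sub_eq_zero] at h2
    rw [← h2]
    push_cast
    module
  by_cases hs0 : s = 0
  · subst hs0
    have hδne : δ ≠ 0 := by
      rintro rfl
      exact (map_ne_zero_iff _ (hbij 0).1).2 hw0 (by simpa using hw 0)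
    have hl := hinv hδne (Or.inr rfl)
    have hw1 : Φ 0 w = δ := by simpa using hw 0
    have hcc := coeff_compare ρ ρ₀ hO hO₀ (Φ 0) (0 : W₀ →ₗ[ℂ] W₀) w 0 (a • δ - ρ₀.d (-1) δ)
      ((b₀ - 1) • δ) fun k => by
        have h1 := hsep 0 lam₀⁻¹ k
        rw [if_pos hl, if_neg hlam₀i1.symm, if_pos rfl, ← ρ₀.ELin_apply hO₀, map_zero, ite_self,
          zero_add, add_zero, zpow_zero, one_smul] at h1
        rw [h1]
        simp only [LinearMap.zero_apply]
        push_cast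
        module
    refine Or.inr ⟨b₀ - 1, b - 1, ⟨w, hw0, (hbij 0).1 ?_, fun i hi => (hbij 0).1 ?_⟩,
      ⟨δ, hδne, hδ0, hδ⟩, by rw [hl, inv_inv], by ring, by ring⟩
    · rw [map_smul, hw1]
      simpa using hcc.2.1
    · rw [map_zero]
      simpa using hcc.2.2 i hi
  have hb : b = b₀ := sub_eq_zero.1 ((smul_eq_zero.1 hbs).resolve_right hs0)
  by_cases hδ1 : δ = 0
  · subst hδ1
    obtain rfl := heq hs0 (Or.inr rfl)
    refine Or.inl ⟨?_, rfl, hb⟩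
    have hint : ∀ u : W, (∀ n, Φ n u = Φ 0 u) → ∀ i : ℤ, -1 ≤ i → ∀ n,
        Φ n (ρ.d i u) = ρ₀.d i (Φ 0 u) := by
      intro u hu i hi n
      have hcc := coeff_compare ρ ρ₀ hO hO₀ (Φ n) LinearMap.id u (Φ 0 u) 0 0 fun k => by
        have h1 := two_term_separate ρ ρ₀ hO hO₀ hlam hlam hΦ (w := u) (s := Φ 0 u) (δ := 0)
          (fun i => by rw [hu, smul_zero, add_zero]) n lam k
        rw [if_pos rfl, if_neg hlam1.symm, if_pos rfl] at h1
        simpa using h1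
      rcases hi.eq_or_lt with rfl | hi
      · simpa using hcc.1
      rcases (show 0 ≤ i by omega).eq_or_lt with rfl | hi
      · simpa using hcc.2.1
      · simpa using hcc.2.2 i hi
    let U : Submodule ℂ W := ⨅ n : ℤ, LinearMap.eqLocus (Φ n) (Φ 0)
    have hU : ∀ u, u ∈ U ↔ ∀ n, Φ n u = Φ 0 u := fun u => by
      simp [U, Submodule.mem_iInf, LinearMap.mem_eqLocus]
    have hUtop : U = ⊤ := by
      refine (hs.2 U fun i hi u hu => ?_).resolve_left fun h => ?_
      · rw [hU] at hu ⊢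
        exact fun n => (hint u hu i hi n).trans (hint u hu i hi 0).symm
      · exact hw0 ((Submodule.eq_bot_iff _).1 h w ((hU w).2 fun n => by simp [hw]))
    exact ⟨LinearEquiv.ofBijective (Φ 0) (hbij 0), fun i hi u =>
      hint u ((hU u).1 (hUtop ▸ Submodule.mem_top)) i hi 0⟩
  · by_cases hne : lam₀⁻¹ = lam₀
    · obtain rfl := eq_neg_one_of_inv_eq hlam₀ hlam₀1 hne
      exact absurd ⟨hδ1, hb ▸ hδ0, hδ⟩ (ρ₀.not_isHW_of_actSimple_neg_one hO₀ hnt₀ hs₀ hL₀ δ)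
    · exact absurd ((hinv hδ1 (Or.inl hne)).symm.trans (heq hs0 (Or.inl hne))) hne

lemma degAct_zero_left (ρ : WittRep W) (hO : ρ.InO) (lam a b : ℂ) (j : ℤ) (w : W) :
    ρ.degAct lam a b 0 j w = (a + j) • w := by
  simp [degAct, ρ.E_zero hO]

lemma apply_eq_zero_of_equiv (ρ : WittRep W) (ρ₀ : WittRep W₀) (hO : ρ.InO) (hO₀ : ρ₀.InO)
    {lam lam₀ a a₀ b b₀ : ℂ} (φ : (ℤ →₀ W) ≃ₗ[ℂ] (ℤ →₀ W₀))
    (hφ : ∀ k f, φ (ρ.Lact lam a b k f) = ρ₀.Lact lam₀ a₀ b₀ k (φ f)) {i j : ℤ}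
    (h : a + j ≠ a₀ + i) (w : W) : φ (Finsupp.single j w) i = 0 := by
  have h1 := DFunLike.congr_fun (hφ 0 (Finsupp.single j w)) i
  rw [ρ.Lact_single hO, ρ.degAct_zero_left hO, zero_add, ← Finsupp.smul_single, map_smul,
    ρ₀.Lact_apply hO₀, sub_zero, ρ₀.degAct_zero_left hO₀, Finsupp.smul_apply, ← sub_eq_zero,
    ← sub_smul] at h1
  exact (smul_eq_zero.1 h1).resolve_left (sub_ne_zero.2 h)

/-- Isomorphisms between the modules `L(W, λ, a, b)` are graded. -/
lemma exists_graded_of_equiv (ρ : WittRep W) (ρ₀ : WittRep W₀) (hO : ρ.InO) (hO₀ : ρ₀.InO)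
    (hs : ρ.IsSimple) {lam lam₀ a a₀ b b₀ : ℂ} (ha : 0 ≤ a.re ∧ a.re < 1)
    (ha₀ : 0 ≤ a₀.re ∧ a₀.re < 1) (φ : (ℤ →₀ W) ≃ₗ[ℂ] (ℤ →₀ W₀))
    (hφ : ∀ k f, φ (ρ.Lact lam a b k f) = ρ₀.Lact lam₀ a₀ b₀ k (φ f)) :
    a = a₀ ∧ ∃ Φ : ℤ → W →ₗ[ℂ] W₀, (∀ j, Function.Bijective (Φ j)) ∧
      ∀ k j w, Φ (k + j) (ρ.degAct lam a b k j w) = ρ₀.degAct lam₀ a₀ b₀ k j (Φ j w) := by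
  have haa : a = a₀ := by
    obtain ⟨w, hw⟩ := hs.1
    by_contra hne
    refine hw (Finsupp.single_eq_zero.1 (φ.map_eq_zero_iff.1 (?_ : φ (Finsupp.single 0 w) = 0)))
    ext i
    refine apply_eq_zero_of_equiv ρ ρ₀ hO hO₀ φ hφ (fun h => hne ?_) w
    have hre := congrArg Complex.re h
    simp only [Complex.add_re, Complex.intCast_re, Int.cast_zero, add_zero] at hre
    have h1 : (-1 : ℝ) < i := by linarith
    have h2 : (i : ℝ) < 1 := by linarith
    obtain rfl : i = 0 := by
      have h1' : -1 < i := by exact_mod_cast h1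
      have h2' : i < 1 := by exact_mod_cast h2
      omega
    simpa using h
  subst haa
  have hsingle : ∀ j w, φ (Finsupp.single j w) = Finsupp.single j (φ (Finsupp.single j w) j) := by
    classical
    intro j w
    ext i
    rw [Finsupp.single_apply]
    split_ifs with h
    · rw [h]
    · exact apply_eq_zero_of_equiv ρ ρ₀ hO hO₀ φ hφ (by simpa using h) w
  refine ⟨rfl, fun j => Finsupp.lapply j ∘ₗ (φ : (ℤ →₀ W) →ₗ[ℂ] (ℤ →₀ W₀)) ∘ₗ Finsupp.lsingle j,
    fun j => ⟨?_, fun v => ?_⟩, fun k j w => ?_⟩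
  · rw [injective_iff_map_eq_zero]
    intro w h
    have h1 : φ (Finsupp.single j w) = 0 := by
      rw [hsingle, show φ (Finsupp.single j w) j = 0 from h, Finsupp.single_zero]
    exact Finsupp.single_eq_zero.1 (φ.map_eq_zero_iff.1 h1)
  · have happ : ∀ f : ℤ →₀ W, φ f j = φ (Finsupp.single j (f j)) j := by
      classical
      intro f
      induction f using Finsupp.induction_linear with
      | zero => simp
      | add f g hf hg => simp only [map_add, Finsupp.add_apply, hf, hg, Finsupp.single_add]
      | single i w =>
        rw [hsingle, Finsupp.single_apply, Finsupp.single_apply]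
        split_ifs with h
        · rw [h]
        · simp
    refine ⟨φ.symm (Finsupp.single j v) j, ?_⟩
    have := happ (φ.symm (Finsupp.single j v))
    rw [φ.apply_symm_apply, Finsupp.single_eq_same] at this
    exact this.symm
  · have h1 := DFunLike.congr_fun (hφ k (Finsupp.single j w)) (k + j)
    rw [ρ.Lact_single hO, hsingle j w, ρ₀.Lact_single hO₀, Finsupp.single_eq_same] at h1
    exact h1

lemma E_equivariant (ρ : WittRep W) (ρ₀ : WittRep W₀) (ψ : W ≃ₗ[ℂ] W₀) (hO : ρ.InO)
    (hψ : ∀ i : ℤ, -1 ≤ i → ∀ w : W, ψ (ρ.d i w) = ρ₀.d i (ψ w)) (k : ℤ) (w : W) :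
    ψ (ρ.E k w) = ρ₀.E k (ψ w) := by
  obtain ⟨n, hn⟩ := hO w
  have hn₀ : ∀ i : ℤ, (n : ℤ) ≤ i → ρ₀.d i (ψ w) = 0 := fun i hi => by
    rw [← hψ i (by omega), hn i hi, map_zero]
  rw [ρ.E_eq_sum hn, ρ₀.E_eq_sum hn₀, map_sum]
  refine Finset.sum_congr rfl fun i _ => ?_
  rw [map_smul, e, e, LinearMap.smul_apply, LinearMap.smul_apply, map_smul, hψ _ (by omega)]

end WittRep

theorem stmt15 {W W₀ : Type*} [AddCommGroup W] [Module ℂ W] [AddCommGroup W₀] [Module ℂ W₀]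
    (ρ : WittRep W) (ρ₀ : WittRep W₀)
    (hO : ρ.InO) (hO₀ : ρ₀.InO) (hnt : ¬ ρ.IsTrivial) (hnt₀ : ¬ ρ₀.IsTrivial)
    (hs : ρ.IsSimple) (hs₀ : ρ₀.IsSimple)
    (lam lam₀ a a₀ b b₀ : ℂ) (hlam : lam ≠ 0) (hlam₀ : lam₀ ≠ 0)
    (ha : 0 ≤ a.re ∧ a.re < 1) (ha₀ : 0 ≤ a₀.re ∧ a₀.re < 1)
    (hLs : ActSimple (ρ.Lact lam a b)) :
    (∃ φ : (ℤ →₀ W) ≃ₗ[ℂ] (ℤ →₀ W₀),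
        ∀ (k : ℤ) (f : ℤ →₀ W), φ (ρ.Lact lam a b k f) = ρ₀.Lact lam₀ a₀ b₀ k (φ f)) ↔
      (((∃ ψ : W ≃ₗ[ℂ] W₀, ∀ i : ℤ, -1 ≤ i → ∀ w : W, ψ (ρ.d i w) = ρ₀.d i (ψ w)) ∧
          lam = lam₀ ∧ a = a₀ ∧ b = b₀) ∨
        (∃ b' b'₀ : ℂ, (∃ w₀ : W, ρ.IsHW w₀ b') ∧ (∃ w₀' : W₀, ρ₀.IsHW w₀' b'₀) ∧
          lam₀ = lam⁻¹ ∧ a = a₀ ∧ b = b'₀ + 1 ∧ b₀ = b' + 1)) := by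
  constructor
  · rintro ⟨φ, hφ⟩
    have hL₀ := WittRep.actSimple_of_equiv φ hφ hLs
    obtain ⟨rfl, Φ, hbij, hΦ⟩ := WittRep.exists_graded_of_equiv ρ ρ₀ hO hO₀ hs ha ha₀ φ hφ
    rcases WittRep.graded_classification ρ ρ₀ hO hO₀ hnt hnt₀ hs hs₀ hlam hlam₀ hLs hL₀ hbij hΦ
      with ⟨hψ, hl, hb⟩ | ⟨b', b'₀, h, h₀, hl, hb, hb₀⟩
    · exact Or.inl ⟨hψ, hl, rfl, hb⟩
    · exact Or.inr ⟨b', b'₀, h, h₀, hl, rfl, hb, hb₀⟩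
  · rintro (⟨⟨ψ, hψ⟩, rfl, rfl, rfl⟩ | ⟨b', b'₀, ⟨w₀, hw⟩, ⟨w₀', hw'⟩, rfl, rfl, rfl, rfl⟩)
    · refine ⟨WittRep.gradedEquiv fun _ => ψ, WittRep.gradedEquiv_Lact ρ ρ₀ hO hO₀ _ _ _ _ _ _ _
        fun k j w => ?_⟩
      rw [WittRep.degAct, WittRep.degAct, map_add, map_sub, map_smul, map_smul,
        WittRep.E_equivariant ρ ρ₀ ψ hO hψ, hψ _ le_rfl]
    · obtain ⟨φ, hφ, -⟩ := WittRep.exists_swap_equiv ρ ρ₀ hO hO₀ hnt hnt₀ hs hs₀ hlam a hw hw'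
      exact ⟨φ, hφ⟩
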